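/- arXiv:2007.11526 — 3 statements merged into one kernel-verified Lean document; each statement's English description precedes it below -/
import Mathlib

section
/- Let d,r be natural numbers with d ≥ 1, and let l₁,…,l_r be r parallel lines in ℝ^d. Suppose A is a finite nonempty d-dimensional subset of ℝ^d with A ⊆ l₁ ∪ ⋯ ∪ l_r and |A ∩ l_i| ≥ 2d² for each 1 ≤ i ≤ r. Then |A-A| ≥ (2d-2)|A| - 1000d³·r. -/
open Finset Pointwise

namespace DS
open Module
set_option linter.unusedSectionVars false

variable {V : Type*} [AddCommGroup V] [Module ℝ V] [FiniteDimensional ℝ V] [DecidableEq V]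

/-- dimension of the affine span -/
noncomputable def dm (X : Finset V) : ℕ := finrank ℝ (vectorSpan ℝ (X : Set V))

lemma frk {V₂ : Type*} [AddCommGroup V₂] [Module ℝ V₂] (f : V →ₗ[ℝ] V₂) (p : Submodule ℝ V)
    (h : LinearMap.ker f ≤ p) : finrank ℝ (p.map f) + finrank ℝ (LinearMap.ker f) = finrank ℝ p := by
  have := LinearMap.finrank_range_add_finrank_ker (f.domRestrict p)
  rw [LinearMap.range_domRestrict] at this
  rw [← this]
  congr 1
  rw [LinearMap.ker_domRestrict]
  exact (Submodule.comapSubtypeEquivOfLe h).finrank_eq.symm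

lemma dm_mono {X Y : Finset V} (h : X ⊆ Y) : dm X ≤ dm Y :=
  Submodule.finrank_mono (vectorSpan_mono ℝ (by exact_mod_cast h))

lemma vs_image {V₂ : Type*} [AddCommGroup V₂] [Module ℝ V₂] (f : V →ₗ[ℝ] V₂) (s : Set V) :
    vectorSpan ℝ (f '' s) = (vectorSpan ℝ s).map f := by
  simp only [vectorSpan, Submodule.map_span]
  congr 1
  exact (Set.image_sub f).symm

lemma cd {X Y : Finset V} (hX : X.Nonempty) (hY : Y.Nonempty) : #X + #Y ≤ #(X - Y) + 1 := by
  have : IsAddTorsionFree V := by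
    refine ⟨fun n hn a b h => ?_⟩
    have h' : (n : ℝ) • a = (n : ℝ) • b := by
      simpa only [Nat.cast_smul_eq_nsmul] using h
    exact smul_right_injective V (show (n : ℝ) ≠ 0 by exact_mod_cast hn) h'
  have := cauchy_davenport_of_isAddTorsionFree hX hY.neg
  rw [← sub_eq_add_neg, Finset.card_neg] at this
  omega

lemma LW (Y Z S : Finset V) (hY : Y.Nonempty) (hYZ : Y ⊆ Z)
    (h1 : Y - Y ⊆ S) (h2 : Y - Z ⊆ S) (h3 : Z - Y ⊆ S) (g h : V → ℕ)
    (hg : ∀ b ∈ Y, ∀ z ∈ Z, h b ≤ g (b - z) ∧ h b ≤ g (z - b)) :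
    ∑ c ∈ Y - Y, g c + 2 * (dm Z - dm Y) * ∑ b ∈ Y, h b ≤ ∑ c ∈ S, g c := by
  classical
  obtain ⟨x0, hx0⟩ := hY
  set W := vectorSpan ℝ (Y : Set V) with hW
  set π := W.mkQ with hπ
  have hk : ∀ a, π a = 0 ↔ a ∈ W := by intro a; simp [hπ]
  have hYW : ∀ a ∈ Y, ∀ b ∈ Y, a - b ∈ W := by
    intro a ha b hb
    exact vsub_mem_vectorSpan ℝ (by exact_mod_cast ha) (by exact_mod_cast hb)
  set T : Set (V ⧸ W) := (fun z => π (z - x0)) '' (Z : Set V) with hT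
  have hspan : Submodule.span ℝ T = (vectorSpan ℝ (Z : Set V)).map π := by
    rw [vectorSpan_eq_span_vsub_set_right ℝ (show x0 ∈ (Z : Set V) by exact_mod_cast hYZ (hx0)),
      Submodule.map_span, hT, Set.image_image]
    rfl
  obtain ⟨b, hbT, hbs, hbl⟩ := exists_linearIndependent ℝ T
  have hbfin : b.Finite := (Z.finite_toSet.image _).subset hbT
  have := hbfin.fintype
  have hcard : #b.toFinset = dm Z - dm Y := by
    have h1 := finrank_span_set_eq_card (R := ℝ) hbl
    have h2 := frk π (vectorSpan ℝ (Z : Set V)) (by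
      rw [hπ, Submodule.ker_mkQ]; exact vectorSpan_mono ℝ (by exact_mod_cast hYZ))
    rw [hbs, hspan] at h1
    rw [h1, hπ, Submodule.ker_mkQ] at h2
    unfold dm
    rw [← hW]
    omega
  set bf := b.toFinset with hbf
  have hb0 : ∀ β ∈ bf, β ≠ 0 := by
    intro β hβ
    exact hbl.ne_zero (⟨β, by simpa [hbf] using hβ⟩ : b)
  have hdisj : Disjoint bf (-bf) := by
    rw [Finset.disjoint_left]
    intro β hβ hβ'
    rw [Finset.mem_neg] at hβ'
    obtain ⟨γ, hγ, hγβ⟩ := hβ'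
    have h1 : β ∈ b := by simpa [hbf] using hβ
    have h2 : γ ∈ b := by simpa [hbf] using hγ
    by_cases he : β = γ
    · subst he
      have : (2 : ℝ) • β = 0 := by
        rw [two_smul]; nth_rewrite 1 [← hγβ]; simp
      exact hb0 β hβ (by simpa using this)
    · have hne : (⟨β, h1⟩ : b) ≠ ⟨γ, h2⟩ := by simpa using he
      have := linearIndependent_iff'.1 hbl {⟨β, h1⟩, ⟨γ, h2⟩} (fun _ => 1) (by
        rw [Finset.sum_pair hne]; simp [← hγβ]) ⟨β, h1⟩ (by simp)
      simp at this
  set U := bf ∪ -bf with hU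
  have hU0 : (0 : V ⧸ W) ∉ U := by
    simp only [hU, Finset.mem_union, Finset.mem_neg, not_or]
    refine ⟨fun h => hb0 0 h rfl, ?_⟩
    rintro ⟨γ, hγ, h⟩
    exact hb0 γ hγ (by simpa using h)
  have hfib : ∀ β ∈ U, ∑ b ∈ Y, h b ≤ ∑ c ∈ S with π c = β, g c := by
    intro β hβ
    have hx : ∀ x ∈ Y, π x = π x0 := by
      intro x hx
      rw [← sub_eq_zero, ← map_sub, hk]
      exact hYW _ hx _ hx0
    rcases Finset.mem_union.1 hβ with h | h
    · obtain ⟨z, hz, hzb⟩ := hbT (show β ∈ b by simpa [hbf] using h)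
      have hz' : z ∈ Z := by exact_mod_cast hz
      refine le_trans ?_ (Finset.sum_le_sum_of_subset (s := Y.image (fun x => z - x)) ?_)
      · rw [Finset.sum_image (fun a _ a' _ h => by simpa using h)]
        exact Finset.sum_le_sum (fun b hb => (hg b hb z hz').2)
      · intro e he
        obtain ⟨x, hx', rfl⟩ := Finset.mem_image.1 he
        rw [Finset.mem_filter]
        refine ⟨h3 (Finset.sub_mem_sub hz' hx'), ?_⟩
        rw [← hzb, map_sub, hx x hx']; simp
    · obtain ⟨γ, hγ, rfl⟩ := Finset.mem_neg.1 h
      obtain ⟨z, hz, hzb⟩ := hbT (show γ ∈ b by simpa [hbf] using hγ)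
      have hz' : z ∈ Z := by exact_mod_cast hz
      refine le_trans ?_ (Finset.sum_le_sum_of_subset (s := Y.image (fun x => x - z)) ?_)
      · rw [Finset.sum_image (fun a _ a' _ h => by simpa using h)]
        exact Finset.sum_le_sum (fun b hb => (hg b hb z hz').1)
      · intro e he
        obtain ⟨x, hx', rfl⟩ := Finset.mem_image.1 he
        rw [Finset.mem_filter]
        refine ⟨h2 (Finset.sub_mem_sub hx' hz'), ?_⟩
        rw [← hzb, map_sub, hx x hx']; simp
  have hUc : #U = 2 * (dm Z - dm Y) := by
    rw [hU, Finset.card_union_of_disjoint hdisj, Finset.card_neg, hcard]; ring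
  have h0 : ∑ c ∈ Y - Y, g c ≤ ∑ c ∈ S with π c = 0, g c := by
    apply Finset.sum_le_sum_of_subset
    intro c hc
    rw [Finset.mem_filter]
    refine ⟨h1 hc, ?_⟩
    obtain ⟨a, ha, b, hb, rfl⟩ := Finset.mem_sub.1 hc
    rw [hk]; exact hYW a ha b hb
  have hsum : ∑ β ∈ insert 0 U, ∑ c ∈ S with π c = β, g c ≤ ∑ c ∈ S, g c := by
    have hfw := Finset.sum_fiberwise_eq_sum_filter S (insert 0 U) π g
    refine le_trans (le_of_eq ?_) (hfw.trans_le ?_)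
    · congr!
    exact Finset.sum_le_sum_of_subset (Finset.filter_subset _ _)
  rw [Finset.sum_insert hU0] at hsum
  have := Finset.card_nsmul_le_sum U _ _ hfib
  rw [smul_eq_mul, hUc] at this
  omega

lemma L (Y Z S : Finset V) (hY : Y.Nonempty) (hYZ : Y ⊆ Z)
    (h1 : Y - Y ⊆ S) (h2 : Y - Z ⊆ S) (h3 : Z - Y ⊆ S) :
    #(Y - Y) + 2 * (dm Z - dm Y) * #Y ≤ #S := by
  simpa using LW Y Z S hY hYZ h1 h2 h3 (fun _ => 1) (fun _ => 1) (by simp)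

lemma sum_split (D : Finset V) (f : V → ℕ) :
    ∑ c ∈ D, f c = #{c ∈ D | 1 ≤ f c} + #{c ∈ D | 2 ≤ f c} + ∑ c ∈ D, (f c - 2) := by
  rw [Finset.card_filter, Finset.card_filter, ← Finset.sum_add_distrib, ← Finset.sum_add_distrib]
  apply Finset.sum_congr rfl
  intro c _
  split_ifs <;> omega

lemma sum_split' (D : Finset V) (f : V → ℕ) :
    ∑ c ∈ D, (f c - 1) = #{c ∈ D | 2 ≤ f c} + ∑ c ∈ D, (f c - 1 - 1) := by
  rw [Finset.card_filter, ← Finset.sum_add_distrib]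
  apply Finset.sum_congr rfl
  intro c _
  split_ifs <;> omega

lemma sum_C2 (C : Finset V) (w : V → ℕ) (k : ℕ) :
    ∑ b ∈ C with 2 ≤ w b, (w b - (k + 1)) = ∑ b ∈ C, (w b - (k + 1)) := by
  apply Finset.sum_subset (Finset.filter_subset _ _)
  intro b hb hb'
  rw [Finset.mem_filter] at hb'
  have : ¬ 2 ≤ w b := fun h => hb' ⟨hb, h⟩
  omega

/-- weighted inequality -/
lemma G (T : ℕ) : ∀ (C : Finset V) (w f : V → ℕ), (∀ b ∈ C, w b ≤ T) →
    (∀ X ⊆ C, X.Nonempty → dm X * #X ≤ #(X - X)) → (∀ b ∈ C, 1 ≤ w b) →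
    (∀ b ∈ C, ∀ b' ∈ C, w b + w b' ≤ f (b - b') + 1) →
    #(C - C) + 2 * dm C * ∑ b ∈ C, (w b - 1) ≤ ∑ c ∈ C - C, f c := by
  induction T with
  | zero =>
    intro C w f hT _ hw _
    have h1 : C = ∅ := by
      apply Finset.eq_empty_of_forall_notMem
      intro b hb; have := hT b hb; have := hw b hb; omega
    rw [h1]; simp
  | succ T ih =>
    intro C w f hT hH hw hf
    set C2 := {b ∈ C | 2 ≤ w b} with hC2
    have hC2C : C2 ⊆ C := Finset.filter_subset _ _
    have m2 : ∀ b ∈ C2, b ∈ C ∧ 2 ≤ w b := fun b hb => Finset.mem_filter.1 hb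
    have hf1 : ∀ c ∈ C - C, 1 ≤ f c := by
      intro c hc
      obtain ⟨a, ha, b, hb, rfl⟩ := Finset.mem_sub.1 hc
      have := hf a ha b hb
      have := hw a ha
      have := hw b hb
      omega
    have hsp : ∑ c ∈ C - C, f c = #(C - C) + ∑ c ∈ C - C, (f c - 1) := by
      rw [Finset.card_eq_sum_ones, ← Finset.sum_add_distrib]
      apply Finset.sum_congr rfl
      intro c hc; have := hf1 c hc; omega
    rcases Finset.eq_empty_or_nonempty C2 with he | hne
    · have h0 : ∑ b ∈ C, (w b - 1) = 0 := by
        have := sum_C2 C w 0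
        rw [← hC2, he] at this
        simpa using this.symm
      rw [h0, hsp]
      omega
    · have hL := LW C2 C (C - C) hne hC2C (Finset.sub_subset_sub hC2C hC2C)
        (Finset.sub_subset_sub_right hC2C) (Finset.sub_subset_sub_left hC2C)
        (fun c => f c - 1) (fun b => w b - 1) (by
          intro b hb z hz
          have h1 := m2 b hb
          have := hf b h1.1 z hz
          have := hf z hz b h1.1
          have := hw z hz
          constructor
          · show w b - 1 ≤ f (b - z) - 1
            omega
          · show w b - 1 ≤ f (z - b) - 1
            omega)
      have hI := ih C2 (fun b => w b - 1) (fun c => f c - 2)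
        (by intro b hb; have := hT b (hC2C hb); show w b - 1 ≤ T; omega)
        (fun X hX => hH X (hX.trans hC2C))
        (by intro b hb; have := (m2 b hb).2; show 1 ≤ w b - 1; omega)
        (by intro b hb b' hb'; have := hf b (hC2C hb) b' (hC2C hb')
            have := (m2 b hb).2; have := (m2 b' hb').2
            show w b - 1 + (w b' - 1) ≤ f (b - b') - 2 + 1
            omega)
      have hs2 : ∑ c ∈ C2 - C2, (f c - 1) = #(C2 - C2) + ∑ c ∈ C2 - C2, (f c - 2) := by
        rw [Finset.card_eq_sum_ones, ← Finset.sum_add_distrib]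
        apply Finset.sum_congr rfl
        intro c hc
        obtain ⟨a, ha, b, hb, rfl⟩ := Finset.mem_sub.1 hc
        have := hf a (hC2C ha) b (hC2C hb)
        have := (m2 a ha).2
        have := (m2 b hb).2
        omega
      have hw2 : ∑ b ∈ C2, (w b - 1) = #C2 + ∑ b ∈ C2, (w b - 1 - 1) := by
        rw [Finset.card_eq_sum_ones, ← Finset.sum_add_distrib]
        apply Finset.sum_congr rfl
        intro b hb
        have := (m2 b hb).2
        omega
      have hD2 := hH C2 hC2C hne
      have hw0 := sum_C2 C w 0
      rw [← hC2] at hw0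
      simp only [zero_add] at hw0
      obtain ⟨i, hi⟩ := Nat.exists_eq_add_of_le (dm_mono hC2C)
      have e1 : dm C - dm C2 = i := by omega
      rw [hsp, ← hw0]
      rw [e1] at hL
      rw [hs2] at hL
      rw [hi]
      rw [hw2] at hL ⊢
      nlinarith

lemma exists_inj (B : Finset V) : ∃ φ : Dual ℝ V, ∀ a ∈ B, ∀ b ∈ B, φ a = φ b → a = b := by
  obtain ⟨φ, hφ⟩ := Module.exists_dual_forall_apply_ne_zero (K := ℝ)
    (fun i : {p : V // p ∈ (B - B).erase 0} => (i : V)) (by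
      rintro ⟨p, hp⟩; exact (Finset.mem_erase.1 hp).1)
  refine ⟨φ, fun a ha b hb h => ?_⟩
  by_contra hne
  refine hφ ⟨a - b, Finset.mem_erase.2 ⟨sub_ne_zero.2 hne, Finset.sub_mem_sub ha hb⟩⟩ ?_
  simp [h]

lemma edge (B : Finset V) (hB : 2 ≤ #B) : ∃ x ∈ B, ∃ y ∈ B, y ≠ x ∧ ∀ z ∈ B, ∀ z' ∈ B, ∀ t : ℝ,
    z + z' - (2 : ℝ) • x = t • (y - x) → ∃ a : ℝ, z - x = a • (y - x) := by
  obtain ⟨φ, hφ⟩ := exists_inj B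
  obtain ⟨x, hx, hmax⟩ := B.exists_max_image φ (Finset.card_pos.1 (by omega))
  have hlt : ∀ z ∈ B, z ≠ x → 0 < φ x - φ z := by
    intro z hz hne
    have h1 := hmax z hz
    have h2 : φ z ≠ φ x := fun h => hne (hφ z hz x hx h)
    have := lt_of_le_of_ne h1 h2
    linarith
  set N : V → V := fun z => (φ x - φ z)⁻¹ • (z - x) with hN
  have hNz : ∀ z ∈ B, z ≠ x → z - x = (φ x - φ z) • N z := by
    intro z hz hne
    have := (hlt z hz hne).ne'
    simp only [hN]
    rw [smul_smul, mul_inv_cancel₀ this, one_smul]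
  obtain ⟨θ, hθ⟩ := exists_inj ((B.erase x).image N)
  obtain ⟨y, hy, hymax⟩ := (B.erase x).exists_max_image (fun z => θ (N z)) (by
    apply Finset.card_pos.1
    rw [Finset.card_erase_of_mem hx]; omega)
  have hyB := Finset.mem_erase.1 hy
  refine ⟨x, hx, y, hyB.2, hyB.1, ?_⟩
  intro z hz z' hz' t ht
  by_cases hzx : z = x
  · exact ⟨0, by simp [hzx]⟩
  by_cases hzx' : z' = x
  · refine ⟨t, ?_⟩
    rw [← ht, hzx', two_smul]; abel
  have a1 := hlt z hz hzx
  have a2 := hlt z' hz' hzx'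
  have a3 := hlt y hyB.2 hyB.1
  have ht1 : (z - x) + (z' - x) = t • (y - x) := by rw [← ht, two_smul]; abel
  have hphi := congrArg φ ht1
  simp only [map_add, map_sub, map_smul, smul_eq_mul] at hphi
  have hth := congrArg θ ht1
  rw [hNz z hz hzx, hNz z' hz' hzx', hNz y hyB.2 hyB.1] at hth
  simp only [map_add, map_smul, smul_eq_mul] at hth
  have b1 := hymax z (Finset.mem_erase.2 ⟨hzx, hz⟩)
  have b2 := hymax z' (Finset.mem_erase.2 ⟨hzx', hz'⟩)
  have heq : θ (N z) = θ (N y) := by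
    apply le_antisymm b1
    by_contra hc
    push Not at hc
    have c1 := mul_lt_mul_of_pos_left hc a1
    have c2 := mul_le_mul_of_nonneg_left b2 a2.le
    have c3 : t * ((φ x - φ y) * θ (N y)) = (φ x - φ z) * θ (N y) + (φ x - φ z') * θ (N y) := by
      have : t * (φ x - φ y) = (φ x - φ z) + (φ x - φ z') := by linarith
      rw [← mul_assoc, this]; ring
    linarith
  have hNe := hθ _ (Finset.mem_image_of_mem N (Finset.mem_erase.2 ⟨hzx, hz⟩)) _
    (Finset.mem_image_of_mem N hy) heq
  refine ⟨(φ x - φ z) * (φ x - φ y)⁻¹, ?_⟩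
  rw [hNz z hz hzx, hNe, mul_smul]

lemma exists_proj (u : V) (hu : u ≠ 0) : ∃ P : V →ₗ[ℝ] V, LinearMap.ker P = Submodule.span ℝ {u} := by
  obtain ⟨ψ, hψ⟩ := Module.Projective.exists_dual_eq_one ℝ hu
  refine ⟨LinearMap.id - ψ.smulRight u, ?_⟩
  ext z
  rw [Submodule.mem_span_singleton, LinearMap.mem_ker]
  simp only [LinearMap.sub_apply, LinearMap.id_apply, LinearMap.smulRight_apply]
  constructor
  · intro h; exact ⟨ψ z, (sub_eq_zero.1 h).symm⟩
  · rintro ⟨a, rfl⟩; simp [hψ]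

lemma dm_proj (P : V →ₗ[ℝ] V) (u : V) (hu : u ≠ 0) (hP : LinearMap.ker P = Submodule.span ℝ {u})
    (A : Finset V) (hA : u ∈ vectorSpan ℝ (A : Set V)) : dm (A.image P) + 1 = dm A := by
  unfold dm
  rw [Finset.coe_image, vs_image]
  have := frk P (vectorSpan ℝ (A : Set V)) (by
    rw [hP, Submodule.span_singleton_le_iff_mem]; exact hA)
  rwa [hP, finrank_span_singleton hu] at this

lemma fib1 (P : V →ₗ[ℝ] V) (A : Finset V) : #A = ∑ c ∈ A.image P, #{a ∈ A | P a = c} :=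
  Finset.card_eq_sum_card_fiberwise (fun _ h => by
    simpa using Finset.mem_image_of_mem P h)

lemma fib2 (P : V →ₗ[ℝ] V) (A : Finset V) :
    #(A - A) = ∑ c ∈ A.image P - A.image P, #{z ∈ A - A | P z = c} :=
  Finset.card_eq_sum_card_fiberwise (fun z h => by
    obtain ⟨a, ha, b, hb, rfl⟩ := Finset.mem_sub.1 h
    rw [map_sub]
    exact Finset.sub_mem_sub (Finset.mem_image_of_mem P ha) (Finset.mem_image_of_mem P hb))

lemma fib_pos (P : V →ₗ[ℝ] V) (A : Finset V) : ∀ c ∈ A.image P, 1 ≤ #{a ∈ A | P a = c} := by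
  intro c hc
  obtain ⟨a, ha, rfl⟩ := Finset.mem_image.1 hc
  exact Finset.card_pos.2 ⟨a, Finset.mem_filter.2 ⟨ha, rfl⟩⟩

lemma fib3 (P : V →ₗ[ℝ] V) (A : Finset V) : ∀ b ∈ A.image P, ∀ b' ∈ A.image P,
    #{a ∈ A | P a = b} + #{a ∈ A | P a = b'} ≤ #{z ∈ A - A | P z = b - b'} + 1 := by
  intro b hb b' hb'
  refine (cd (Finset.card_pos.1 (fib_pos P A b hb)) (Finset.card_pos.1 (fib_pos P A b' hb'))).trans ?_
  gcongr
  intro z hz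
  obtain ⟨x, hx, y, hy, rfl⟩ := Finset.mem_sub.1 hz
  rw [Finset.mem_filter] at hx hy
  rw [Finset.mem_filter]
  exact ⟨Finset.sub_mem_sub hx.1 hy.1, by rw [map_sub, hx.2, hy.2]⟩

lemma dm_zero {X : Finset V} (h : dm X = 0) : #X ≤ 1 := by
  rw [Finset.card_le_one]
  intro a ha b hb
  have h1 : vectorSpan ℝ (X : Set V) = ⊥ := Submodule.finrank_eq_zero.1 h
  have h2 : a -ᵥ b ∈ vectorSpan ℝ (X : Set V) :=
    vsub_mem_vectorSpan ℝ (by exact_mod_cast ha) (by exact_mod_cast hb)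
  rw [h1, Submodule.mem_bot] at h2
  exact sub_eq_zero.1 h2

lemma dm_singleton (a : V) : dm ({a} : Finset V) = 0 := by
  unfold dm
  rw [Finset.coe_singleton, vectorSpan_singleton, finrank_bot]

lemma main1 (k : ℕ) : ∀ B : Finset V, B.Nonempty → dm B = k → dm B * #B + 1 ≤ #(B - B) := by
  induction k using Nat.strong_induction_on with
  | _ k ih =>
  intro B hB hk
  have hcd := cd hB hB
  have hpos := hB.card_pos
  rcases Nat.lt_or_ge k 2 with hk2 | hk2
  · interval_cases k
    · rw [hk]; omega
    · rw [hk]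
      have : #B ≠ 1 := by
        intro h
        obtain ⟨a, rfl⟩ := Finset.card_eq_one.1 h
        rw [dm_singleton] at hk
        omega
      omega
  have hB2 : 2 ≤ #B := by
    by_contra h
    have : #B = 1 := by omega
    obtain ⟨a, rfl⟩ := Finset.card_eq_one.1 this
    rw [dm_singleton] at hk
    omega
  obtain ⟨x, hx, y, hy, hyx, hedge⟩ := edge B hB2
  have hu : y - x ≠ 0 := sub_ne_zero.2 hyx
  obtain ⟨P, hP⟩ := exists_proj (y - x) hu
  have hker : ∀ z, P z = 0 ↔ ∃ a : ℝ, a • (y - x) = z := by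
    intro z
    rw [← LinearMap.mem_ker, hP, Submodule.mem_span_singleton]
  have hdm := dm_proj P _ hu hP B
    (vsub_mem_vectorSpan ℝ (by exact_mod_cast hy) (by exact_mod_cast hx))
  have hB1 := fib1 P B
  have hB2 := fib2 P B
  have hf := fib3 P B
  have hw := fib_pos P B
  set C := B.image P with hC
  set w : V → ℕ := fun c => #{a ∈ B | P a = c} with hwd
  set f : V → ℕ := fun c => #{z ∈ B - B | P z = c} with hfd
  change #B = ∑ c ∈ C, w c at hB1
  change #(B - B) = ∑ c ∈ C - C, f c at hB2
  change ∀ b ∈ C, ∀ b' ∈ C, w b + w b' ≤ f (b - b') + 1 at hf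
  change ∀ c ∈ C, 1 ≤ w c at hw
  have hCne : C.Nonempty := hB.image P
  have hIH : ∀ X ⊆ C, X.Nonempty → dm X * #X + 1 ≤ #(X - X) := by
    intro X hX hXn
    have := dm_mono hX
    exact ih (dm X) (by omega) X hXn rfl
  set v := P x with hv
  have hvC : v ∈ C := Finset.mem_image_of_mem P hx
  have hyv : P y = v := by
    rw [hv, ← sub_eq_zero, ← map_sub, hker]; exact ⟨1, by simp⟩
  have hwv : 2 ≤ w v := by
    have : ({x, y} : Finset V) ⊆ {a ∈ B | P a = v} := by
      intro a ha
      rw [Finset.mem_filter]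
      rcases Finset.mem_insert.1 ha with rfl | h
      · exact ⟨hx, rfl⟩
      · rw [Finset.mem_singleton.1 h]; exact ⟨hy, hyv⟩
    have h2 := Finset.card_le_card this
    rwa [Finset.card_pair hyx.symm] at h2
  have hmid : ∀ c ∈ C, ∀ c' ∈ C, v - c = c' - v → c = v := by
    intro c hc c' hc' h
    obtain ⟨z, hz, rfl⟩ := Finset.mem_image.1 hc
    obtain ⟨z', hz', rfl⟩ := Finset.mem_image.1 hc'
    have h0 : P (z + z' - (2 : ℝ) • x) = 0 := by
      have : P z' = v - P z + v := by rw [h]; abel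
      rw [map_sub, map_add, map_smul, this, two_smul, ← hv]; abel
    obtain ⟨t, ht⟩ := (hker _).1 h0
    obtain ⟨a, ha⟩ := hedge z hz z' hz' t ht.symm
    rw [hv, ← sub_eq_zero, ← map_sub, hker]
    exact ⟨a, ha.symm⟩
  set C2 := {b ∈ C | 2 ≤ w b} with hC2
  have hC2C : C2 ⊆ C := Finset.filter_subset _ _
  have hvC2 : v ∈ C2 := Finset.mem_filter.2 ⟨hvC, hwv⟩
  have hne : C2.Nonempty := ⟨v, hvC2⟩
  set S1 := {c ∈ C - C | 1 ≤ f c} with hS1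
  set S2 := {c ∈ C - C | 2 ≤ f c} with hS2
  have hS1c : C - C ⊆ S1 := by
    intro c hc
    obtain ⟨a, ha, b, hb, rfl⟩ := Finset.mem_sub.1 hc
    have h1 := hw a ha
    have h2 := hw b hb
    have := hf a ha b hb
    exact Finset.mem_filter.2 ⟨hc, by omega⟩
  have key : ∀ a ∈ C2, ∀ b ∈ C, a - b ∈ S2 ∧ b - a ∈ S2 := by
    intro a ha b hb
    have h1 := Finset.mem_filter.1 ha
    have h2 := hw b hb
    have h3 := hf a h1.1 b hb
    have h4 := hf b hb a h1.1
    exact ⟨Finset.mem_filter.2 ⟨Finset.sub_mem_sub h1.1 hb, by omega⟩,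
      Finset.mem_filter.2 ⟨Finset.sub_mem_sub hb h1.1, by omega⟩⟩
  have hS2b := L C2 C S2 hne hC2C (by
        intro c hc
        obtain ⟨a, ha, b, hb, rfl⟩ := Finset.mem_sub.1 hc
        exact (key a ha b (hC2C hb)).1) (by
        intro c hc
        obtain ⟨a, ha, b, hb, rfl⟩ := Finset.mem_sub.1 hc
        exact (key a ha b hb).1) (by
        intro c hc
        obtain ⟨a, ha, b, hb, rfl⟩ := Finset.mem_sub.1 hc
        exact (key b hb a ha).2)
  have hS2a : 2 * #C ≤ #S2 + 1 := by
    set F1 := C.image (fun c => v - c) with hF1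
    set F2 := (C.erase v).image (fun c => c - v) with hF2
    have hd : Disjoint F1 F2 := by
      rw [Finset.disjoint_left]
      intro e h1 h2
      obtain ⟨c, hc, rfl⟩ := Finset.mem_image.1 h1
      obtain ⟨c', hc', h⟩ := Finset.mem_image.1 h2
      have hc'' := Finset.mem_erase.1 hc'
      have h3 := hmid c hc c' hc''.2 h.symm
      apply hc''.1
      rw [h3, sub_self] at h
      exact sub_eq_zero.1 h
    have hsub : F1 ∪ F2 ⊆ S2 := by
      apply Finset.union_subset
      · intro e h1
        obtain ⟨c, hc, rfl⟩ := Finset.mem_image.1 h1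
        exact (key v hvC2 c hc).1
      · intro e h1
        obtain ⟨c, hc, rfl⟩ := Finset.mem_image.1 h1
        exact (key v hvC2 c (Finset.mem_of_mem_erase hc)).2
    have h1 : #F1 = #C := Finset.card_image_of_injective _ (fun a b h => by simpa using h)
    have h2 : #F2 = #(C.erase v) := Finset.card_image_of_injective _ (fun a b h => by simpa using h)
    rw [Finset.card_erase_of_mem hvC] at h2
    have h3 := Finset.card_le_card hsub
    rw [Finset.card_union_of_disjoint hd] at h3
    omega
  have hR1 := G (∑ b ∈ C, w b) C2 (fun b => w b - 1) (fun c => f c - 2)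
    (by
      intro b hb
      have := Finset.single_le_sum (f := w) (fun i _ => Nat.zero_le _) (hC2C hb)
      show w b - 1 ≤ _
      omega)
    (fun X h1 h2 => by have := hIH X (h1.trans hC2C) h2; omega)
    (by intro b hb; have := (Finset.mem_filter.1 hb).2; show 1 ≤ w b - 1; omega)
    (by intro b hb b' hb'; have := hf b (hC2C hb) b' (hC2C hb')
        have := hw b (hC2C hb); have := hw b' (hC2C hb')
        show w b - 1 + (w b' - 1) ≤ f (b - b') - 2 + 1
        have := (Finset.mem_filter.1 hb).2
        omega)
  have hR2 := LW C2 C (C - C) hne hC2C (Finset.sub_subset_sub hC2C hC2C)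
        (Finset.sub_subset_sub_right hC2C) (Finset.sub_subset_sub_left hC2C)
        (fun c => f c - 2) (fun b => w b - 1 - 1) (by
          intro b hb z hz
          have h1 := hC2C hb
          have := hf b h1 z hz
          have := hf z hz b h1
          have := hw z hz
          constructor
          · show w b - 1 - 1 ≤ f (b - z) - 2
            omega
          · show w b - 1 - 1 ≤ f (z - b) - 2
            omega)
  have hE0 := sum_C2 C w 1
  rw [← hC2] at hE0
  simp only [Nat.reduceAdd] at hE0
  have hR : #(C2 - C2) + 2 * dm C * ∑ c ∈ C, (w c - 1 - 1) ≤ ∑ c ∈ C - C, (f c - 2) := by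
    obtain ⟨i, hi⟩ := Nat.exists_eq_add_of_le (dm_mono hC2C)
    have e1 : dm C - dm C2 = i := by omega
    rw [e1] at hR2
    simp only [Nat.sub_sub, Nat.reduceAdd] at hR1 hR2 ⊢
    rw [hi, ← hE0]
    nlinarith
  have hsp := sum_split (C - C) f
  rw [← hS1, ← hS2, ← hB2] at hsp
  have hsw := sum_split' C w
  rw [← hC2] at hsw
  have hsw0 : ∑ c ∈ C, w c = #C + ∑ c ∈ C, (w c - 1) := by
    rw [Finset.card_eq_sum_ones, ← Finset.sum_add_distrib]
    apply Finset.sum_congr rfl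
    intro c hc; have := hw c hc; omega
  rw [hsw, ← hB1] at hsw0
  have hN1 := Finset.card_le_card hS1c
  have hN1' := hIH C (Finset.Subset.refl _) hCne
  have hD := hIH C2 hC2C hne
  have hD' := cd hne hne
  have hle := dm_mono hC2C
  have hc2 := hne.card_pos
  have hz : dm C2 = 0 → #C2 ≤ 1 := dm_zero
  rw [← hdm, hsw0, hsp]
  set E := ∑ c ∈ C, (w c - 1 - 1) with hE
  set R := ∑ c ∈ C - C, (f c - 2) with hRd
  obtain ⟨j, hj⟩ := Nat.exists_eq_add_of_le hle
  have e1 : dm C - dm C2 = j := by omega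
  rw [e1] at hS2b
  have hn : 1 ≤ dm C := by omega
  have hnE : (dm C + 1) * E ≤ 2 * dm C * E := Nat.mul_le_mul_right _ (by omega)
  have h3 : 2 * (dm C2 + 1) * #C2 + 1 ≤ 3 * #(C2 - C2) := by
    rcases Nat.lt_or_ge (dm C2) 2 with h | h
    · interval_cases h' : dm C2
      · have := hz rfl; omega
      · have : #C2 ≠ 1 := by
          intro h
          obtain ⟨a, ha⟩ := Finset.card_eq_one.1 h
          rw [ha] at h'
          rw [dm_singleton] at h'
          omega
        omega
    · nlinarith
  have hjn : (dm C + 1) * #C2 = (dm C2 + 1) * #C2 + j * #C2 := by rw [hj]; ring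
  have ex : (dm C + 1) * (#C + (#C2 + E)) = dm C * #C + #C + (dm C + 1) * #C2 + (dm C + 1) * E := by
    ring
  have ex2 : 2 * j * #C2 = 2 * (j * #C2) := by ring
  have ex3 : 2 * (dm C2 + 1) * #C2 = 2 * ((dm C2 + 1) * #C2) := by ring
  rw [ex, hjn]
  rw [ex2] at hS2b
  rw [ex3] at h3
  generalize (dm C + 1) * E = q1 at *
  generalize 2 * dm C * E = q2 at *
  generalize (dm C2 + 1) * #C2 = q3 at *
  generalize j * #C2 = q4 at *
  generalize dm C * #C = q5 at *
  clear hjn ex ex2 ex3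
  omega

lemma main2 (A : Finset V) (u : V) (hu : u ≠ 0) (hA : u ∈ vectorSpan ℝ (A : Set V))
    (P : V →ₗ[ℝ] V) (hP : LinearMap.ker P = Submodule.span ℝ {u}) :
    2 * (dm A - 1) * #A ≤ #(A - A) + 2 * (dm A - 1) * #(A.image P) := by
  have hdm := dm_proj P u hu hP A hA
  have hw := fib_pos P A
  have hG := G (#A) (A.image P) (fun c => #{a ∈ A | P a = c}) (fun c => #{z ∈ A - A | P z = c})
    (fun b _ => Finset.card_filter_le _ _)
    (fun X _ h => by have := main1 _ X h rfl; omega) hw (fib3 P A)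
  rw [← fib2] at hG
  have hs : #A = #(A.image P) + ∑ c ∈ A.image P, (#{a ∈ A | P a = c} - 1) := by
    rw [Finset.card_eq_sum_ones (A.image P), ← Finset.sum_add_distrib]
    nth_rewrite 1 [fib1 P A]
    apply Finset.sum_congr rfl
    intro c hc; have := hw c hc; omega
  have : dm A - 1 = dm (A.image P) := by omega
  rw [this]
  nlinarith

end DS

theorem stmt_4 {d r : ℕ} (hd : 1 ≤ d) (v : Fin d → ℝ) (hv : v ≠ 0)
    (p : Fin r → (Fin d → ℝ))
    (l : Fin r → Set (Fin d → ℝ))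
    (hl : ∀ i, l i = {x | ∃ t : ℝ, x = p i + t • v})
    (A : Finset (Fin d → ℝ)) (hA : A.Nonempty)
    (hdim : Module.finrank ℝ (affineSpan ℝ (A : Set (Fin d → ℝ))).direction = d)
    (hcover : (A : Set (Fin d → ℝ)) ⊆ ⋃ i, l i)
    (hbig : ∀ i, 2 * d ^ 2 ≤ ((A : Set (Fin d → ℝ)) ∩ l i).ncard) :
    ((A - A).card : ℤ) ≥ (2 * d - 2 : ℤ) * A.card - 1000 * d ^ 3 * r := by
  rw [direction_affineSpan] at hdim
  have htop : vectorSpan ℝ (A : Set (Fin d → ℝ)) = ⊤ := by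
    apply Submodule.eq_top_of_finrank_eq
    rw [hdim]; simp
  obtain ⟨P, hP⟩ := DS.exists_proj v hv
  have hm := DS.main2 A v hv (by rw [htop]; trivial) P hP
  have hdm : DS.dm A = d := hdim
  rw [hdm] at hm
  have hPv : P v = 0 := by
    rw [← LinearMap.mem_ker, hP]; exact Submodule.mem_span_singleton_self v
  have hC : (A.image P).card ≤ r := by
    have hsub : A.image P ⊆ Finset.univ.image (fun i => P (p i)) := by
      intro c hc
      obtain ⟨a, ha, rfl⟩ := Finset.mem_image.1 hc
      obtain ⟨i, hi⟩ := Set.mem_iUnion.1 (hcover (by exact_mod_cast ha))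
      rw [hl i] at hi
      obtain ⟨t, rfl⟩ := hi
      exact Finset.mem_image.2 ⟨i, Finset.mem_univ _, by simp [hPv]⟩
    refine (Finset.card_le_card hsub).trans (Finset.card_image_le.trans ?_)
    simp
  obtain ⟨n, rfl⟩ := Nat.exists_eq_add_of_le' hd
  simp only [Nat.add_sub_cancel] at hm
  have h1 : 2 * n * (A.image P).card ≤ 1000 * (n + 1) ^ 3 * r := by
    apply Nat.mul_le_mul _ hC
    nlinarith [Nat.zero_le (n ^ 3), Nat.zero_le (n ^ 2)]
  have h2 : 2 * n * A.card ≤ (A - A).card + 1000 * (n + 1) ^ 3 * r := hm.trans (by omega)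
  zify at h2
  push_cast
  linarith
end

section
/- Let d ≥ 3 be a natural number and A ⊆ ℝ^d a finite nonempty set with dim(A) = d. Then there exists δ > 0 and a constant C_d > 0, both depending only on d, such that |A-A| ≥ (2d-2)|A| - C_d·|A|^{1-δ}. -/
open Finset Pointwise

universe u

section Part1
variable {V : Type u} [AddCommGroup V] [Module ℝ V] [DecidableEq V]

/-- affine dimension of a finite set -/
noncomputable def dm (X : Finset V) : ℕ := Module.finrank ℝ (vectorSpan ℝ (X : Set V))

/-- largest total weight of a pair of points of `X` with difference `v` -/
def Mx (X : Finset V) (w : V → ℕ) (v : V) : ℕ :=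
  ((X ×ˢ X).filter fun p => p.1 - p.2 = v).sup fun p => w p.1 + w p.2

/-- weighted size of the difference set -/
def FF (X : Finset V) (w : V → ℕ) : ℕ := ∑ v ∈ X - X, Mx X w v

lemma le_Mx {X : Finset V} {w : V → ℕ} {x y : V} (hx : x ∈ X) (hy : y ∈ X) :
    w x + w y ≤ Mx X w (x - y) := by
  unfold Mx
  exact Finset.le_sup (f := fun p : V × V => w p.1 + w p.2) (b := (x, y)) (by simp [hx, hy])

lemma exists_Mx {X : Finset V} (w : V → ℕ) {v : V} (hv : v ∈ X - X) :
    ∃ x ∈ X, ∃ y ∈ X, x - y = v ∧ Mx X w v = w x + w y := by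
  obtain ⟨x, hx, y, hy, rfl⟩ := Finset.mem_sub.1 hv
  have hne : ((X ×ˢ X).filter fun p => p.1 - p.2 = x - y).Nonempty := ⟨(x, y), by simp [hx, hy]⟩
  obtain ⟨p, hp, hp'⟩ := Finset.exists_mem_eq_sup _ hne (fun p : V × V => w p.1 + w p.2)
  simp only [mem_filter, mem_product] at hp
  exact ⟨p.1, hp.1.1, p.2, hp.1.2, hp.2, hp'⟩

lemma le_Mx' {X : Finset V} {w : V → ℕ} {x y v : V} (hx : x ∈ X) (hy : y ∈ X) (h : x - y = v) :
    w x + w y ≤ Mx X w v := h ▸ le_Mx hx hy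

lemma cd_sub {S T : Finset V} (hS : S.Nonempty) (hT : T.Nonempty) :
    #S + #T ≤ #(S - T) + 1 := by
  have : IsAddTorsionFree V := IsAddTorsionFree.of_isTorsionFree ℝ V
  have := cauchy_davenport_of_isAddTorsionFree hS hT.neg
  rw [← sub_eq_add_neg, Finset.card_neg] at this
  omega

lemma wsum {S B : Finset V} (hS : S.Nonempty) (hB : B.Nonempty) (u m : V → ℕ)
    (hu : ∀ b ∈ B, 1 ≤ u b) (hm : ∀ x ∈ S, ∀ b ∈ B, u b ≤ m (x - b)) :
    #S + ∑ b ∈ B, u b ≤ ∑ v ∈ S - B, m v + 1 := by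
  classical
  let S' : Finset (V × ℝ) := S.image fun x => (x, (0 : ℝ))
  let B' : Finset (V × ℝ) := (B.sigma fun b => range (u b)).image fun p => (p.1, (p.2 : ℝ))
  have hS' : #S' = #S := card_image_of_injective _ (fun a b h => by simpa using h)
  have hB' : #B' = ∑ b ∈ B, u b := by
    rw [card_image_of_injective, card_sigma]
    · simp
    · rintro ⟨a, i⟩ ⟨b, j⟩ h
      simp at h
      simp [h]
  have hS'n : S'.Nonempty := hS.image _
  have hB'n : B'.Nonempty := by
    obtain ⟨b, hb⟩ := hB
    exact ⟨(b, ((0 : ℕ) : ℝ)), mem_image.2 ⟨⟨b, 0⟩, by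
      have := hu b hb
      simp [hb]; omega, rfl⟩⟩
  have h1 := cd_sub hS'n hB'n
  have h2 : S' - B' ⊆ ((S - B).sigma fun v => range (m v)).image
      fun p => (p.1, -(p.2 : ℝ)) := by
    intro z hz
    obtain ⟨p, hp, q, hq, rfl⟩ := mem_sub.1 hz
    obtain ⟨x, hx, rfl⟩ := mem_image.1 hp
    obtain ⟨⟨b, j⟩, hb, rfl⟩ := mem_image.1 hq
    simp only [mem_sigma, mem_range] at hb
    refine mem_image.2 ⟨⟨x - b, j⟩, ?_, by simp⟩
    simp only [mem_sigma, mem_range]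
    exact ⟨sub_mem_sub hx hb.1, lt_of_lt_of_le hb.2 (hm x hx b hb.1)⟩
  have h3 := (card_le_card h2).trans card_image_le
  rw [card_sigma] at h3
  simp only [card_range] at h3
  omega

lemma finrank_map_mkQ (S W : Submodule ℝ V) [FiniteDimensional ℝ S] (h : W ≤ S) :
    Module.finrank ℝ (S.map W.mkQ) + Module.finrank ℝ W = Module.finrank ℝ S := by
  have h1 := LinearMap.finrank_range_add_finrank_ker (W.mkQ.domRestrict S)
  rw [LinearMap.range_domRestrict, LinearMap.ker_domRestrict, Submodule.ker_mkQ] at h1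
  rw [← h1]
  congr 1
  exact (LinearEquiv.finrank_eq (Submodule.comapSubtypeEquivOfLe h)).symm

instance fd_vs (X : Finset V) : FiniteDimensional ℝ (vectorSpan ℝ (X : Set V)) :=
  finiteDimensional_vectorSpan_of_finite ℝ X.finite_toSet

lemma vs_mono {B X : Finset V} (h : B ⊆ X) :
    vectorSpan ℝ (B : Set V) ≤ vectorSpan ℝ (X : Set V) := vectorSpan_mono ℝ (by exact_mod_cast h)

lemma sym_card (Y : Finset V) : 2 * Module.finrank ℝ (Submodule.span ℝ (Y : Set V)) ≤
    #((Y ∪ -Y).erase 0) := by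
  classical
  obtain ⟨b, hbY, hbs, hbl⟩ := exists_linearIndependent ℝ (Y : Set V)
  have hbf : b.Finite := Y.finite_toSet.subset hbY
  obtain ⟨T, rfl⟩ := hbf.exists_finset_coe
  have hc : Module.finrank ℝ (Submodule.span ℝ (Y : Set V)) = #T := by
    rw [← hbs]
    exact finrank_span_finset_eq_card hbl
  have h0 : (0 : V) ∉ T := fun h => hbl.ne_zero (⟨0, h⟩ : (T : Set V)) rfl
  have hd : Disjoint T (-T) := by
    rw [Finset.disjoint_left]
    intro t ht ht'
    rw [Finset.mem_neg'] at ht'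
    have hne : t ≠ 0 := fun h => h0 (h ▸ ht)
    have hne' : (⟨t, ht⟩ : (T : Set V)) ≠ ⟨-t, ht'⟩ := by
      intro h
      have h2 : t = -t := by simpa using h
      apply hne
      have : (2 : ℝ) • t = 0 := by rw [two_smul]; nth_rewrite 2 [h2]; simp
      simpa using this
    have hp := linearIndependent_iff'.1 hbl {⟨t, ht⟩, ⟨-t, ht'⟩} (fun _ => 1)
      (by rw [sum_pair hne']; simp) ⟨t, ht⟩ (by simp)
    simp at hp
  rw [hc]
  calc 2 * #T = #(T ∪ -T) := by rw [card_union_of_disjoint hd, card_neg]; ring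
    _ ≤ _ := card_le_card (by
      intro t ht
      have hTY : T ⊆ Y := by exact_mod_cast hbY
      rw [mem_erase, mem_union, mem_neg']
      rw [mem_union, mem_neg'] at ht
      rcases ht with ht | ht
      · exact ⟨fun h => h0 (h ▸ ht), Or.inl (hTY ht)⟩
      · exact ⟨fun h => h0 (by simpa [h] using ht), Or.inr (hTY ht)⟩)

end Part1
section Part2
variable {V : Type u} [AddCommGroup V] [Module ℝ V] [DecidableEq V]

/-- contribution of the differences outside `W` -/
lemma coset_bound {X B : Finset V} (hBX : B ⊆ X) (u : V → ℕ)
    (hu : ∀ b ∈ B, 1 ≤ u b) (b0 : V) (hb0 : b0 ∈ B) (W : Submodule ℝ V)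
    (hW : ∀ b ∈ B, b - b0 ∈ W) [DecidablePred (· ∈ W)] :
    2 * Module.finrank ℝ ((vectorSpan ℝ (X : Set V)).map W.mkQ) * (∑ b ∈ B, u b) ≤
      ∑ v ∈ (X - X).filter (· ∉ W), Mx X u v ∧
    #X + 2 * Module.finrank ℝ ((vectorSpan ℝ (X : Set V)).map W.mkQ) * (∑ b ∈ B, u b) ≤
      ∑ v ∈ (X - X).filter (· ∉ W), Mx X u v + #(X.filter (fun x => x - b0 ∈ W))
      + 2 * Module.finrank ℝ ((vectorSpan ℝ (X : Set V)).map W.mkQ) := by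
  classical
  have hBn : B.Nonempty := ⟨b0, hb0⟩
  set s := ∑ b ∈ B, u b with hs
  set q := Module.finrank ℝ ((vectorSpan ℝ (X : Set V)).map W.mkQ) with hq
  let ρ := W.mkQ
  have hρ0 : ∀ v, ρ v = 0 ↔ v ∈ W := fun v => Submodule.Quotient.mk_eq_zero W
  have hρB : ∀ b ∈ B, ρ b = ρ b0 := fun b hb => by
    have := (hρ0 _).2 (hW b hb)
    rwa [map_sub, sub_eq_zero] at this
  let Y : Finset (V ⧸ W) := X.image fun x => ρ (x - b0)
  let Y' := (Y ∪ -Y).erase 0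
  let g : V ⧸ W → ℕ := fun y => #(X.filter fun x => ρ (x - b0) = y)
  let T := (X - X).filter (· ∉ W)
  let e : V ⧸ W → ℕ := fun y => ∑ v ∈ T.filter (fun v => ρ v = y), Mx X u v
  -- cardinality of Y'
  have hY' : 2 * q ≤ #Y' := by
    refine le_trans (le_of_eq ?_) (sym_card Y)
    have hspan : (vectorSpan ℝ (X : Set V)).map W.mkQ = Submodule.span ℝ (Y : Set (V ⧸ W)) := by
      rw [vectorSpan_eq_span_vsub_set_right ℝ (p := b0) (by exact_mod_cast hBX hb0),
        Submodule.map_span, ← Set.image_comp]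
      simp only [Y, ρ, coe_image]
      rfl
    rw [hq, hspan]
  -- main bound
  have key0 : ∀ y ∈ Y, y ≠ 0 → g y + s ≤ e y + 1 ∧ g y + s ≤ e (-y) + 1 := by
    intro y hy hy0
    let S := X.filter fun x => ρ (x - b0) = y
    have hS : S.Nonempty := by
      obtain ⟨x, hx, hxy⟩ := mem_image.1 hy
      exact ⟨x, mem_filter.2 ⟨hx, hxy⟩⟩
    have hSB : ∀ v ∈ S - B, v ∈ X - X ∧ ρ v = y := by
      intro v hv
      obtain ⟨x, hx, b, hb, rfl⟩ := mem_sub.1 hv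
      have hx := mem_filter.1 hx
      refine ⟨sub_mem_sub hx.1 (hBX hb), ?_⟩
      rw [map_sub, hρB b hb, ← map_sub]
      exact hx.2
    constructor
    · have h1 := wsum hS hBn u (Mx X u) hu (fun x hx b hb =>
        le_trans (Nat.le_add_left _ _) (le_Mx (mem_filter.1 hx).1 (hBX hb)))
      refine le_trans h1 (Nat.add_le_add_right (sum_le_sum_of_subset ?_) 1)
      intro v hv
      obtain ⟨h2, h3⟩ := hSB v hv
      refine mem_filter.2 ⟨mem_filter.2 ⟨h2, fun h => hy0 ?_⟩, h3⟩
      rw [← h3]; exact (hρ0 v).2 h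
    · have h1 := wsum hS hBn u (fun v => Mx X u (-v)) hu (fun x hx b hb => by
        rw [neg_sub]
        exact le_trans (Nat.le_add_right _ _) (le_Mx (hBX hb) (mem_filter.1 hx).1))
      refine le_trans h1 (Nat.add_le_add_right ?_ 1)
      rw [← sum_image (f := Mx X u) (g := fun v => -v) (fun a _ b _ h => neg_injective h)]
      refine sum_le_sum_of_subset ?_
      intro v hv
      obtain ⟨v', hv', rfl⟩ := mem_image.1 hv
      obtain ⟨h2, h3⟩ := hSB v' hv'
      refine mem_filter.2 ⟨mem_filter.2 ⟨?_, fun h => hy0 ?_⟩, by rw [map_neg, h3]⟩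
      · obtain ⟨x, hx, z, hz, rfl⟩ := mem_sub.1 h2
        rw [neg_sub]; exact sub_mem_sub hz hx
      · rw [← h3]; exact (hρ0 v').2 (by simpa using h)
  have gpos : ∀ y ∈ Y, 1 ≤ g y := by
    intro y hy
    obtain ⟨x, hx, hxy⟩ := mem_image.1 hy
    exact card_pos.2 ⟨x, mem_filter.2 ⟨hx, hxy⟩⟩
  have gzero : ∀ y, y ∉ Y → g y = 0 := by
    intro y hy
    refine card_eq_zero.2 (filter_eq_empty_iff.2 fun x hx h => hy (mem_image.2 ⟨x, hx, h⟩))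
  have key : ∀ y ∈ Y', g y + s ≤ e y + 1 ∧ s ≤ e y := by
    intro y hy
    obtain ⟨hy0, hy⟩ := mem_erase.1 hy
    rcases mem_union.1 hy with hy | hy
    · have h1 := (key0 y hy hy0).1
      have h2 := gpos y hy
      omega
    · rw [mem_neg'] at hy
      have h1 := (key0 (-y) hy (by simpa using hy0)).2
      rw [neg_neg] at h1
      have h2 := gpos _ hy
      by_cases hyY : y ∈ Y
      · have h1 := (key0 y hyY hy0).1
        have h2 := gpos y hyY
        omega
      · rw [gzero y hyY]
        omega
  have hsum : ∑ y ∈ Y', e y ≤ ∑ v ∈ T, Mx X u v := by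
    rw [← sum_biUnion]
    · refine sum_le_sum_of_subset ?_
      intro v hv
      obtain ⟨y, _, hv⟩ := mem_biUnion.1 hv
      exact (mem_filter.1 hv).1
    · intro y _ z _ hyz
      rw [Function.onFun, Finset.disjoint_left]
      intro v hv hv'
      exact hyz ((mem_filter.1 hv).2.symm.trans (mem_filter.1 hv').2)
  have hX : #X ≤ #(X.filter (fun x => x - b0 ∈ W)) + ∑ y ∈ Y', g y := by
    have h1 : #X = ∑ y ∈ Y, g y := card_eq_sum_card_image _ _
    have h2 : ∑ y ∈ Y, g y ≤ ∑ y ∈ insert 0 Y', g y := by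
      refine sum_le_sum_of_subset ?_
      intro y hy
      by_cases h : y = 0
      · simp [h]
      · exact mem_insert_of_mem (mem_erase.2 ⟨h, mem_union_left _ hy⟩)
    rw [sum_insert (by simp [Y'])] at h2
    have h3 : g 0 = #(X.filter (fun x => x - b0 ∈ W)) := by
      simp only [g]
      congr 1
      refine filter_congr fun x _ => hρ0 _
    omega
  have hs1 : 1 ≤ s := by
    have := single_le_sum (f := u) (fun _ _ => Nat.zero_le _) hb0
    have := hu b0 hb0
    omega
  constructor
  · calc 2 * q * s ≤ #Y' * s := Nat.mul_le_mul_right _ hY'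
      _ = ∑ y ∈ Y', s := by simp
      _ ≤ ∑ y ∈ Y', e y := sum_le_sum fun y hy => (key y hy).2
      _ ≤ _ := hsum
  · have h1 : ∑ y ∈ Y', (g y + s) ≤ ∑ y ∈ Y', (e y + 1) := sum_le_sum fun y hy => (key y hy).1
    rw [sum_add_distrib, sum_add_distrib] at h1
    simp only [sum_const, smul_eq_mul, mul_one] at h1
    have h2 : 2 * q * (s - 1) ≤ #Y' * (s - 1) := Nat.mul_le_mul_right _ hY'
    obtain ⟨t, ht⟩ : ∃ t, s = t + 1 := ⟨s - 1, by omega⟩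
    rw [ht] at h1 h2 ⊢
    simp only [Nat.add_sub_cancel] at h2
    change _ ≤ ∑ v ∈ T, Mx X u v + _ + _
    nlinarith

/-- dimension bookkeeping -/
lemma dm_quot {X B : Finset V} (hBX : B ⊆ X) :
    Module.finrank ℝ ((vectorSpan ℝ (X : Set V)).map (vectorSpan ℝ (B : Set V)).mkQ) + dm B
      = dm X := finrank_map_mkQ _ _ (vs_mono hBX)

/-- the statement `|A - A| ≥ k |A| + 1` in dimension `k` -/
def HH (k : ℕ) : Prop :=
  ∀ (V : Type u) [AddCommGroup V] [Module ℝ V] [DecidableEq V] (A : Finset V),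
    A.Nonempty → dm A = k → k * #A + 1 ≤ #(A - A)

lemma FF_succ {X : Finset V} (w u : V → ℕ) (h : ∀ x ∈ X, w x = u x + 1) :
    FF X u + 2 * #(X - X) ≤ FF X w := by
  unfold FF
  rw [mul_comm, ← smul_eq_mul, ← sum_const, ← sum_add_distrib]
  refine sum_le_sum fun v hv => ?_
  obtain ⟨x, hx, y, hy, hxy, hM⟩ := exists_Mx u hv
  have := le_Mx' (w := w) hx hy hxy
  rw [h x hx, h y hy] at this
  omega

lemma Mx_mono {X B : Finset V} (h : B ⊆ X) (w : V → ℕ) {v : V} (hv : v ∈ B - B) :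
    Mx B w v ≤ Mx X w v := by
  obtain ⟨x, hx, y, hy, hxy, hM⟩ := exists_Mx w hv
  rw [hM]
  exact le_Mx' (h hx) (h hy) hxy

lemma JJ (D : ℕ) (hH : ∀ k ≤ D, HH.{u} k) :
    ∀ (N : ℕ) (X : Finset V) (w : V → ℕ), #X + ∑ x ∈ X, w x ≤ N → X.Nonempty → dm X ≤ D →
      2 * dm X * ∑ x ∈ X, w x ≤ FF X w := by
  classical
  intro N
  induction N with
  | zero =>
    intro X w h hX _
    have := card_pos.2 hX
    omega
  | succ N ih =>
    intro X w hN hX hD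
    by_cases hall : ∀ x ∈ X, 1 ≤ w x
    · have h1 := FF_succ (X := X) w (fun x => w x - 1) (fun x hx => by
        have := hall x hx
        omega)
      have hc := card_pos.2 hX
      have h2 : ∑ x ∈ X, w x = ∑ x ∈ X, (w x - 1) + #X := by
        rw [card_eq_sum_ones, ← sum_add_distrib]
        exact sum_congr rfl fun x hx => by have := hall x hx; omega
      have h3 := ih X (fun x => w x - 1) (by omega) hX hD
      have h4 := hH _ hD V X hX rfl
      rw [h2]
      nlinarith
    · push Not at hall
      obtain ⟨x0, hx0, hwx0⟩ := hall
      let B := X.filter fun x => 1 ≤ w x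
      have hBX : B ⊆ X := filter_subset _ _
      have hsum : ∑ x ∈ X, w x = ∑ x ∈ B, w x := by
        symm
        apply sum_filter_of_ne
        intro x _ h
        omega
      by_cases hB : B.Nonempty
      · obtain ⟨b0, hb0⟩ := hB
        have hlt : #B < #X := card_lt_card (filter_ssubset.2 ⟨x0, hx0, by omega⟩)
        have hdm := dm_quot hBX
        have h1 := ih B w (by omega) ⟨b0, hb0⟩ (by omega)
        have h2 := (coset_bound hBX w (fun b hb => (mem_filter.1 hb).2) b0 hb0
          (vectorSpan ℝ (B : Set V)) (fun b hb => vsub_mem_vectorSpan ℝ (by exact_mod_cast hb)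
            (by exact_mod_cast hb0))).1
        have h3 : FF B w + ∑ v ∈ (X - X).filter (· ∉ vectorSpan ℝ (B : Set V)), Mx X w v
            ≤ FF X w := by
          unfold FF
          rw [← sum_filter_add_sum_filter_not (X - X) (· ∈ vectorSpan ℝ (B : Set V))]
          gcongr
          refine (sum_le_sum fun v hv => Mx_mono hBX w hv).trans (sum_le_sum_of_subset ?_)
          intro v hv
          refine mem_filter.2 ⟨sub_subset_sub hBX hBX hv, ?_⟩
          obtain ⟨x, hx, y, hy, rfl⟩ := mem_sub.1 hv
          exact vsub_mem_vectorSpan ℝ (by exact_mod_cast hx) (by exact_mod_cast hy)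
        rw [hsum, ← hdm]
        nlinarith
      · rw [not_nonempty_iff_eq_empty] at hB
        rw [hsum, hB]
        simp

lemma UU (D : ℕ) (hH : ∀ k ≤ D, HH.{u} k) (X : Finset V) (hX : dm X = D) (u : V → ℕ)
    (hs : 2 ≤ ∑ x ∈ X, u x) : #X + (D + 1) * ∑ x ∈ X, u x ≤ FF X u := by
  classical
  let B := X.filter fun x => 1 ≤ u x
  have hBX : B ⊆ X := filter_subset _ _
  have hsum : ∑ x ∈ X, u x = ∑ x ∈ B, u x := by
    symm
    apply sum_filter_of_ne
    intro x _ h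
    omega
  have hB : B.Nonempty := by
    rw [nonempty_iff_ne_empty]
    intro h
    rw [hsum, h] at hs
    simp at hs
  obtain ⟨b0, hb0⟩ := hB
  have hu : ∀ b ∈ B, 1 ≤ u b := fun b hb => (mem_filter.1 hb).2
  have hdm := dm_quot hBX
  have hWB : ∀ x ∈ B, ∀ y ∈ B, x - y ∈ vectorSpan ℝ (B : Set V) := fun x hx y hy =>
    vsub_mem_vectorSpan ℝ (by exact_mod_cast hx) (by exact_mod_cast hy)
  have h2 := (coset_bound hBX u hu b0 hb0 (vectorSpan ℝ (B : Set V))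
    (fun b hb => hWB b hb b0 hb0)).2
  rw [hsum] at hs ⊢
  set s := ∑ x ∈ B, u x with hsdef
  set W := vectorSpan ℝ (B : Set V) with hWdef
  set X0 := X.filter (fun x => x - b0 ∈ W) with hX0
  set q := Module.finrank ℝ ((vectorSpan ℝ (X : Set V)).map W.mkQ) with hq
  have hBX0 : B ⊆ X0 := fun b hb => mem_filter.2 ⟨hBX hb, hWB b hb b0 hb0⟩
  -- zero coset
  have h0 : #X0 + (dm B + 1) * s ≤ ∑ v ∈ (X - X).filter (· ∈ W), Mx X u v := by
    rcases Nat.eq_zero_or_pos (dm B) with hβ | hβ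
    · have hW0 : W = ⊥ := Submodule.finrank_eq_zero.1 hβ
      have hX0' : X0 ⊆ {b0} := by
        intro x hx
        have := (mem_filter.1 hx).2
        rw [hW0, Submodule.mem_bot, sub_eq_zero] at this
        simp [this]
      have hB1 : B = {b0} := by
        refine Subset.antisymm (hBX0.trans hX0') (by simpa using hb0)
      have h1 : s = u b0 := by rw [hsdef, hB1, sum_singleton]
      have h3 := card_le_card hX0'
      rw [card_singleton] at h3
      have h4 : Mx X u 0 ≤ ∑ v ∈ (X - X).filter (· ∈ W), Mx X u v := by
        refine single_le_sum (f := Mx X u) (fun _ _ => Nat.zero_le _) ?_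
        exact mem_filter.2 ⟨mem_sub.2 ⟨b0, hBX hb0, b0, hBX hb0, sub_self _⟩, W.zero_mem⟩
      have h5 := le_Mx' (w := u) (hBX hb0) (hBX hb0) (sub_self b0)
      rw [hβ]
      omega
    · have hc := cd_sub (S := X0) (T := B) ⟨b0, hBX0 hb0⟩ ⟨b0, hb0⟩
      have hβD : dm B ≤ D := by omega
      have hJ := JJ D hH _ B (fun x => u x - 1) le_rfl ⟨b0, hb0⟩ hβD
      have hHB := hH _ hβD V B ⟨b0, hb0⟩ rfl
      have hs' : s = ∑ x ∈ B, (u x - 1) + #B := by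
        rw [hsdef, card_eq_sum_ones, ← sum_add_distrib]
        exact sum_congr rfl fun x hx => by have := hu x hx; omega
      have hmain : #(X0 - B) + (FF B (fun x => u x - 1) + #(B - B)) ≤
          ∑ v ∈ (X - X).filter (· ∈ W), Mx X u v := by
        have e1 : #(X0 - B) = ∑ v ∈ (X - X).filter (· ∈ W), if v ∈ X0 - B then 1 else 0 := by
          rw [sum_ite_mem, card_eq_sum_ones]
          refine sum_congr ?_ fun _ _ => rfl
          symm
          rw [inter_eq_right]
          intro v hv
          obtain ⟨x, hx, y, hy, rfl⟩ := mem_sub.1 hv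
          have hx := mem_filter.1 hx
          refine mem_filter.2 ⟨sub_mem_sub hx.1 (hBX hy), ?_⟩
          have := W.sub_mem hx.2 (hWB y hy b0 hb0)
          simpa using this
        have e2 : FF B (fun x => u x - 1) + #(B - B) = ∑ v ∈ (X - X).filter (· ∈ W),
            if v ∈ B - B then Mx B (fun x => u x - 1) v + 1 else 0 := by
          rw [sum_ite_mem, card_eq_sum_ones, FF, ← sum_add_distrib]
          refine sum_congr ?_ fun _ _ => rfl
          symm
          rw [inter_eq_right]
          intro v hv
          obtain ⟨x, hx, y, hy, rfl⟩ := mem_sub.1 hv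
          exact mem_filter.2 ⟨sub_mem_sub (hBX hx) (hBX hy), hWB x hx y hy⟩
        rw [e1, e2, ← sum_add_distrib]
        refine sum_le_sum fun v hv => ?_
        by_cases hv1 : v ∈ B - B
        · have hv2 : v ∈ X0 - B := sub_subset_sub hBX0 (Subset.refl _) hv1
          rw [if_pos hv1, if_pos hv2]
          obtain ⟨x, hx, y, hy, hxy, hM⟩ := exists_Mx (fun x => u x - 1) hv1
          have h6 := le_Mx' (w := u) (hBX hx) (hBX hy) hxy
          have := hu x hx
          have := hu y hy
          omega
        · rw [if_neg hv1, add_zero]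
          split_ifs with hv2
          · obtain ⟨x, hx, y, hy, hxy⟩ := mem_sub.1 hv2
            have h6 := le_Mx' (w := u) (mem_filter.1 hx).1 (hBX hy) hxy
            have := hu y hy
            omega
          · exact Nat.zero_le _
      set t := ∑ x ∈ B, (u x - 1)
      rw [hs']
      have h7 : (dm B + 1) * t ≤ 2 * dm B * t := Nat.mul_le_mul_right _ (by omega)
      nlinarith
  have h3 : FF X u = ∑ v ∈ (X - X).filter (· ∈ W), Mx X u v +
      ∑ v ∈ (X - X).filter (· ∉ W), Mx X u v := by
    unfold FF
    rw [sum_filter_add_sum_filter_not]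
  rw [h3]
  have hD : D = q + dm B := by omega
  rw [hD]
  nlinarith

end Part2
section Part3
variable {V : Type u} [AddCommGroup V] [Module ℝ V] [DecidableEq V]

lemma image_sub_lin {Q : Type u} [AddCommGroup Q] [Module ℝ Q] [DecidableEq Q]
    (π : V →ₗ[ℝ] Q) (A : Finset V) : (A - A).image π = A.image π - A.image π :=
  by
  ext v
  simp only [mem_image, mem_sub]
  constructor
  · rintro ⟨_, ⟨a, ha, b, hb, rfl⟩, rfl⟩
    exact ⟨π a, ⟨a, ha, rfl⟩, π b, ⟨b, hb, rfl⟩, (map_sub π a b).symm⟩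
  · rintro ⟨_, ⟨a, ha, rfl⟩, _, ⟨b, hb, rfl⟩, rfl⟩
    exact ⟨a - b, ⟨a, ha, b, hb, rfl⟩, map_sub π a b⟩

lemma fibre_bound {Q : Type u} [AddCommGroup Q] [Module ℝ Q] [DecidableEq Q]
    (π : V →ₗ[ℝ] Q) (A : Finset V) :
    FF (A.image π) (fun x => #(A.filter fun a => π a = x)) ≤
      #(A - A) + #(A.image π - A.image π) := by
  rw [card_eq_sum_card_image π (A - A), image_sub_lin, card_eq_sum_ones (A.image π - A.image π),
    ← sum_add_distrib, FF]
  refine sum_le_sum fun v hv => ?_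
  obtain ⟨x, hx, y, hy, hxy, hM⟩ := exists_Mx (fun x => #(A.filter fun a => π a = x)) hv
  rw [hM]
  have hne : ∀ x ∈ A.image π, (A.filter fun a => π a = x).Nonempty := by
    intro x hx
    obtain ⟨a, ha, h⟩ := mem_image.1 hx
    exact ⟨a, mem_filter.2 ⟨ha, h⟩⟩
  refine (cd_sub (hne x hx) (hne y hy)).trans (Nat.add_le_add_right (card_le_card ?_) 1)
  intro z hz
  obtain ⟨a, ha, b, hb, rfl⟩ := mem_sub.1 hz
  have ha := mem_filter.1 ha
  have hb := mem_filter.1 hb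
  refine mem_filter.2 ⟨sub_mem_sub ha.1 hb.1, ?_⟩
  rw [map_sub, ha.2, hb.2, hxy]

lemma dm_image_mkQ (A : Finset V) (e : V) (he : e ≠ 0) (hA : e ∈ vectorSpan ℝ (A : Set V))
    [DecidableEq (V ⧸ Submodule.span ℝ {e})] :
    dm (A.image (Submodule.span ℝ {e}).mkQ) + 1 = dm A := by
  have h1 := finrank_map_mkQ (vectorSpan ℝ (A : Set V)) (Submodule.span ℝ {e})
    ((Submodule.span_singleton_le_iff_mem _ _).2 hA)
  rw [finrank_span_singleton he] at h1
  unfold dm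
  have := AffineMap.map_vectorSpan (Submodule.span ℝ {e}).mkQ.toAffineMap (s := (A : Set V))
  simp only [LinearMap.toAffineMap_linear, LinearMap.coe_toAffineMap] at this
  rw [← h1, coe_image, this]

lemma sum_fibres {Q : Type u} [DecidableEq Q] (f : V → Q) (A : Finset V) :
    ∑ x ∈ A.image f, #(A.filter fun a => f a = x) = #A := (card_eq_sum_card_image f A).symm

lemma dm_lt_card (A : Finset V) (hA : A.Nonempty) : dm A + 1 ≤ #A := by
  have hc := card_pos.2 hA
  have := finrank_vectorSpan_image_finset_le ℝ (fun x : V => x) A (n := #A - 1) (by omega)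
  rw [image_id'] at this
  unfold dm
  omega

theorem HH_all (k : ℕ) : HH.{u} k := by
  induction k using Nat.strong_induction_on with
  | _ k ih =>
  intro V _ _ _ A hA hk
  classical
  have hn := dm_lt_card A hA
  by_cases hr : ∃ a ∈ A, ∃ b ∈ A, ∃ c ∈ A, ∃ d ∈ A, a - b = c - d ∧ a ≠ b ∧ a ≠ c
  · obtain ⟨a, ha, b, hb, c, hc, d, hd, hv, hab, hac⟩ := hr
    have he : a - b ≠ 0 := sub_ne_zero.2 hab
    have heA : a - b ∈ vectorSpan ℝ (A : Set V) :=
      vsub_mem_vectorSpan ℝ (by exact_mod_cast ha) (by exact_mod_cast hb)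
    have hdm := dm_image_mkQ A (a - b) he heA
    set W := Submodule.span ℝ {a - b} with hW
    set π := W.mkQ with hπ
    set X := A.image π with hX
    have hπab : π a = π b := by
      rw [← sub_eq_zero, ← map_sub]
      exact (Submodule.Quotient.mk_eq_zero W).2 (Submodule.mem_span_singleton_self _)
    have hπcd : π c = π d := by
      rw [← sub_eq_zero, ← map_sub, ← hv]
      exact (Submodule.Quotient.mk_eq_zero W).2 (Submodule.mem_span_singleton_self _)
    have hcd : c ≠ d := by
      intro h
      rw [h, sub_self] at hv
      exact he hv
    have hbcda : b = c → d = a → False := by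
      rintro rfl rfl
      have h2 : (2 : ℝ) • (d - b) = 0 := by
        rw [two_smul]; nth_rewrite 2 [hv]; simp
      exact he (by simpa using h2)
    have hXsub : X ⊆ ((A.erase a).erase c).image π := by
      intro x hx
      obtain ⟨z, hz, rfl⟩ := mem_image.1 hx
      have mk : ∀ t ∈ A, t ≠ a → t ≠ c → π t = π z → π z ∈ ((A.erase a).erase c).image π :=
        fun t ht h1 h2 h3 => mem_image.2 ⟨t, mem_erase.2 ⟨h2, mem_erase.2 ⟨h1, ht⟩⟩, h3⟩
      by_cases hza : z = a
      · subst hza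
        by_cases hbc : b = c
        · exact mk d hd (fun h => hbcda hbc h) hcd.symm (by rw [← hπcd, ← hbc, hπab])
        · exact mk b hb hab.symm hbc hπab.symm
      · by_cases hzc : z = c
        · subst hzc
          by_cases hda : d = a
          · exact mk b hb hab.symm (fun h => hbcda h hda) (by rw [← hπab, ← hda, hπcd])
          · exact mk d hd hda hcd.symm hπcd.symm
        · exact mk z hz hza hzc rfl
    have hXc : #X + 2 ≤ #A := by
      have h1 := (card_le_card hXsub).trans card_image_le
      have h2 := card_erase_add_one ha
      have h3 := card_erase_add_one (mem_erase.2 ⟨hac.symm, hc⟩)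
      omega
    have hw : ∀ x ∈ X, #(A.filter fun a => π a = x) = (#(A.filter fun a => π a = x) - 1) + 1 := by
      intro x hx
      obtain ⟨z, hz, hzx⟩ := mem_image.1 hx
      have : 0 < #(A.filter fun a => π a = x) := card_pos.2 ⟨z, mem_filter.2 ⟨hz, hzx⟩⟩
      omega
    have hsum : #A = ∑ x ∈ X, (#(A.filter fun a => π a = x) - 1) + #X := by
      rw [← sum_fibres π A, card_eq_sum_ones X, ← sum_add_distrib]
      exact sum_congr rfl hw
    have h1 := fibre_bound π A
    have h2 := FF_succ (X := X) (fun x => #(A.filter fun a => π a = x))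
      (fun x => #(A.filter fun a => π a = x) - 1) hw
    have hXn : X.Nonempty := hA.image _
    have hlt : dm X < k := by omega
    have h3 := ih (dm X) hlt _ X hXn rfl
    have h4 := UU (dm X) (fun j hj => ih j (by omega)) X rfl
      (fun x => #(A.filter fun a => π a = x) - 1) (by omega)
    have hkD : k = dm X + 1 := by omega
    rw [hkD]
    set s := ∑ x ∈ X, (#(A.filter fun a => π a = x) - 1)
    nlinarith
  · push Not at hr
    have hinj : Set.InjOn (fun p : V × V => p.1 - p.2) (A.offDiag : Set (V × V)) := by
      rintro ⟨a, b⟩ hab ⟨c, d⟩ hcd h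
      simp only [coe_offDiag, Set.mem_offDiag, mem_coe] at hab hcd
      simp only at h
      have hac : a = c := hr a hab.1 b hab.2.1 c hcd.1 d hcd.2.1 h hab.2.2
      subst hac
      simpa using h
    have h1 : insert 0 (A.offDiag.image fun p : V × V => p.1 - p.2) ⊆ A - A := by
      intro v hv
      rcases mem_insert.1 hv with rfl | hv
      · obtain ⟨a, ha⟩ := hA
        exact mem_sub.2 ⟨a, ha, a, ha, sub_self _⟩
      · obtain ⟨⟨a, b⟩, hp, rfl⟩ := mem_image.1 hv
        rw [mem_offDiag] at hp
        exact sub_mem_sub hp.1 hp.2.1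
    have h2 := card_le_card h1
    rw [card_insert_of_notMem, card_image_of_injOn hinj, offDiag_card] at h2
    · have h3 : k * #A + #A ≤ #A * #A := by
        have : (k + 1) * #A ≤ #A * #A := Nat.mul_le_mul_right _ (by omega)
        linarith
      omega
    · intro h
      obtain ⟨⟨a, b⟩, hp, h0⟩ := mem_image.1 h
      rw [mem_offDiag] at hp
      exact hp.2.2 (sub_eq_zero.1 h0)

/-- The lower bound in terms of the number of parallel lines. -/
theorem line_bound (A : Finset V) (hA : A.Nonempty) (e : V) (he : e ≠ 0)
    (heA : e ∈ vectorSpan ℝ (A : Set V)) [DecidableEq (V ⧸ Submodule.span ℝ {e})] :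
    2 * (dm A - 1) * #A ≤ #(A - A) + #((A - A).image (Submodule.span ℝ {e}).mkQ) := by
  have hdm := dm_image_mkQ A e he heA
  have h1 := fibre_bound (Submodule.span ℝ {e}).mkQ A
  have h2 := JJ (dm (A.image (Submodule.span ℝ {e}).mkQ)) (fun k _ => HH_all k) _
    (A.image (Submodule.span ℝ {e}).mkQ)
    (fun x => #(A.filter fun a => (Submodule.span ℝ {e}).mkQ a = x)) le_rfl (hA.image _) le_rfl
  rw [sum_fibres] at h2
  rw [image_sub_lin, ← hdm]
  exact h2.trans h1

end Part3
section Part4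
variable {V : Type u} [AddCommGroup V] [Module ℝ V] [DecidableEq V]

lemma covering (A : Finset V) (hA : A.Nonempty) (K : ℕ) (hK : #(A - A) ≤ K * #A) :
    ∃ X : Finset V, #X ≤ K ^ 5 ∧ (A - A) + (A - A) ⊆ X + (A - A) := by
  have h1 := pluennecke_ruzsa_inequality_nsmul_sub_nsmul_sub hA A 3 2
  have hc : (0 : ℚ≥0) < #A := by exact_mod_cast card_pos.2 hA
  have h2 : ((#(A - A) : ℚ≥0) / #A) ≤ K := by
    rw [div_le_iff₀ hc]
    exact_mod_cast hK
  have h3 : (#(3 • A - 2 • A) : ℚ≥0) ≤ (K : ℚ≥0) ^ 5 * #A := by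
    refine h1.trans ?_
    gcongr
  have h4 : #(3 • A - 2 • A) ≤ K ^ 5 * #A := by exact_mod_cast h3
  have h5 : (A - A) + (A - A) + A = 3 • A - 2 • A := by
    have h3A : (3 : ℕ) • A = A + A + A := by
      rw [show (3 : ℕ) = 2 + 1 from rfl, succ_nsmul, two_nsmul]
    rw [h3A, two_nsmul, sub_eq_add_neg, sub_eq_add_neg, neg_add]
    ac_rfl
  obtain ⟨X, _, hX, hX'⟩ := ruzsa_covering_add (A := (A - A) + (A - A)) (B := A)
    (K := (K : ℝ) ^ 5) hA (by rw [h5]; exact_mod_cast h4)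
  exact ⟨X, by exact_mod_cast hX, hX'⟩

lemma growth (B X : Finset V) (h : B + B ⊆ X + B) (N : ℕ) :
    #((N + 1) • B) ≤ #B * (N + 1) ^ #X := by
  have key : ∀ z ∈ (N + 1) • B, ∃ b ∈ B, ∃ n : X → ℕ, (∀ x, n x ≤ N) ∧
      z = b + ∑ x, n x • (x : V) := by
    induction N with
    | zero =>
      intro z hz
      simp only [zero_add, one_nsmul] at hz
      exact ⟨z, hz, fun _ => 0, fun _ => le_rfl, by simp⟩
    | succ N ih =>
      intro z hz
      rw [succ_nsmul] at hz
      obtain ⟨y, hy, b, hb, rfl⟩ := mem_add.1 hz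
      obtain ⟨b', hb', n, hn, rfl⟩ := ih y hy
      obtain ⟨x, hx, b'', hb'', hx'⟩ := mem_add.1 (h (add_mem_add hb' hb))
      refine ⟨b'', hb'', fun t => n t + if t = ⟨x, hx⟩ then 1 else 0, ?_, ?_⟩
      · intro t
        have := hn t
        show n t + (if t = ⟨x, hx⟩ then 1 else 0) ≤ N + 1
        split_ifs <;> omega
      · simp only [add_smul, sum_add_distrib, ite_smul, one_smul, zero_smul, sum_ite_eq',
          mem_univ, if_true]
        rw [add_right_comm, ← hx']
        abel
  have hsub : (N + 1) • B ⊆ (B ×ˢ Fintype.piFinset (fun _ : X => range (N + 1))).image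
      (fun p : V × (X → ℕ) => p.1 + ∑ x, p.2 x • (x : V)) := by
    intro z hz
    obtain ⟨b, hb, n, hn, rfl⟩ := key z hz
    refine mem_image.2 ⟨(b, n), ?_, rfl⟩
    simp only [mem_product, Fintype.mem_piFinset, mem_range]
    exact ⟨hb, fun x => by have := hn x; omega⟩
  refine (card_le_card hsub).trans (card_image_le.trans ?_)
  rw [card_product, Fintype.card_piFinset]
  simp

lemma doubling_chain (B X : Finset V) (h : B + B ⊆ X + B) (m : ℕ) (hm : #X ^ m < #B) :
    ∃ b ∈ B, ∃ b' ∈ B, b ≠ b' ∧ ∀ i ≤ m, (2 ^ i) • (b - b') ∈ B - B := by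
  have h1 : ∀ b, ∃ p : V × V, b ∈ B → p.1 ∈ B ∧ p.2 ∈ X ∧ b + b = p.2 + p.1 := by
    intro b
    by_cases hb : b ∈ B
    · obtain ⟨x, hx, y, hy, hxy⟩ := mem_add.1 (h (add_mem_add hb hb))
      exact ⟨(y, x), fun _ => ⟨hy, hx, hxy.symm⟩⟩
    · exact ⟨(0, 0), fun h => absurd h hb⟩
  choose p hp using h1
  let F : V → V := fun b => (p b).1
  have hF : ∀ i, ∀ b ∈ B, F^[i] b ∈ B := by
    intro i
    induction i with
    | zero => intro b hb; simpa using hb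
    | succ i ih =>
      intro b hb
      rw [Function.iterate_succ_apply']
      exact (hp _ (ih b hb)).1
  obtain ⟨b, hb, b', hb', hne, heq⟩ := exists_ne_map_eq_of_card_lt_of_maps_to
    (s := B) (t := Fintype.piFinset (fun _ : Fin m => X))
    (f := fun b i => (p (F^[i] b)).2) (by rw [Fintype.card_piFinset_const]; simpa using hm)
    (by
      intro b hb
      simp only [mem_coe, Fintype.mem_piFinset]
      intro i
      exact (hp _ (hF i b hb)).2.1)
  refine ⟨b, hb, b', hb', hne, ?_⟩
  have key : ∀ i ≤ m, (2 ^ i) • (b - b') = F^[i] b - F^[i] b' := by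
    intro i
    induction i with
    | zero => intro _; simp
    | succ i ih =>
      intro hi
      have h2 := ih (by omega)
      have h3 := (hp _ (hF i b hb)).2.2
      have h4 := (hp _ (hF i b' hb')).2.2
      have h5 : (p (F^[i] b)).2 = (p (F^[i] b')).2 := congrFun heq ⟨i, by omega⟩
      rw [pow_succ', mul_smul, h2, two_smul, Function.iterate_succ_apply',
        Function.iterate_succ_apply']
      change _ = (p (F^[i] b)).1 - (p (F^[i] b')).1
      calc F^[i] b - F^[i] b' + (F^[i] b - F^[i] b')
          = (F^[i] b + F^[i] b) - (F^[i] b' + F^[i] b') := by abel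
        _ = _ := by rw [h3, h4, h5]; abel
  intro i hi
  rw [key i hi]
  exact sub_mem_sub (hF i b hb) (hF i b' hb')

theorem few_lines (A : Finset V) (hA : A.Nonempty) (K : ℕ) (hK : #(A - A) ≤ K * #A) (m : ℕ)
    (hm : (K ^ 5) ^ m < #A) : ∃ e : V, e ≠ 0 ∧ e ∈ vectorSpan ℝ (A : Set V) ∧
      ∀ [DecidableEq (V ⧸ Submodule.span ℝ {e})],
      #((A - A).image (Submodule.span ℝ {e}).mkQ) * 2 ^ m ≤
        K * #A * (2 * m + 1) ^ (K ^ 5) := by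
  obtain ⟨X, hX, hcov⟩ := covering A hA K hK
  set B := A - A with hB
  have hcB : #A ≤ #B := by
    obtain ⟨a, ha⟩ := hA
    exact card_le_card_sub_right ⟨a, ha⟩
  obtain ⟨b, hb, b', hb', hne, hchain⟩ := doubling_chain B X hcov m
    (lt_of_le_of_lt (Nat.pow_le_pow_left hX m) (lt_of_lt_of_le hm hcB))
  have hBspan : ∀ b ∈ B, b ∈ vectorSpan ℝ (A : Set V) := by
    intro b hb
    obtain ⟨x, hx, y, hy, rfl⟩ := mem_sub.1 hb
    exact vsub_mem_vectorSpan ℝ (by exact_mod_cast hx) (by exact_mod_cast hy)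
  have hBneg : -B = B := by rw [hB, neg_sub]
  have h0B : (0 : V) ∈ B := by
    obtain ⟨a, ha⟩ := hA
    exact mem_sub.2 ⟨a, ha, a, ha, sub_self _⟩
  set e := b - b' with he
  have he0 : e ≠ 0 := sub_ne_zero.2 hne
  refine ⟨e, he0, Submodule.sub_mem _ (hBspan b hb) (hBspan b' hb'), ?_⟩
  intro _
  have hmul : ∀ t ≤ m, ∀ j < 2 ^ t, j • e ∈ (2 * t) • B := by
    intro t
    induction t with
    | zero =>
      intro _ j hj
      have : j = 0 := by simpa using hj
      simp [this]
    | succ t ih =>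
      intro ht j hj
      rw [mul_add, add_nsmul, mul_one, two_nsmul]
      by_cases hj' : j < 2 ^ t
      · have h1 := add_mem_add (ih (by omega) j hj') (add_mem_add h0B h0B)
        simpa using h1
      · obtain ⟨i, rfl⟩ : ∃ i, j = i + 2 ^ t := ⟨j - 2 ^ t, by omega⟩
        rw [add_smul]
        refine add_mem_add (ih (by omega) i (by rw [pow_succ] at hj; omega)) ?_
        have h2 := hchain t (by omega)
        rwa [sub_eq_add_neg B B, hBneg] at h2
  set π := (Submodule.span ℝ {e}).mkQ with hπ
  have hπe : ∀ j : ℕ, π (j • e) = 0 := fun j => by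
    rw [map_nsmul]
    have : π e = 0 := (Submodule.Quotient.mk_eq_zero _).2 (Submodule.mem_span_singleton_self _)
    rw [this, smul_zero]
  have hsec : ∀ v, ∃ c, v ∈ B.image π → c ∈ B ∧ π c = v := by
    intro v
    by_cases hv : v ∈ B.image π
    · obtain ⟨c, hc, hcv⟩ := mem_image.1 hv
      exact ⟨c, fun _ => ⟨hc, hcv⟩⟩
    · exact ⟨0, fun h => absurd h hv⟩
  choose σ hσ using hsec
  have hcard : #(B.image π ×ˢ range (2 ^ m)) ≤ #((2 * m + 1) • B) := by
    refine card_le_card_of_injOn (fun p => p.2 • e + σ p.1) ?_ ?_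
    · rintro ⟨v, j⟩ hp
      simp only [coe_product, Set.mem_prod, mem_coe, mem_range] at hp
      rw [succ_nsmul]
      exact add_mem_add (hmul m le_rfl j hp.2) (hσ v hp.1).1
    · rintro ⟨v, j⟩ hp ⟨v', j'⟩ hp' h
      simp only [coe_product, Set.mem_prod, mem_coe, mem_range] at hp hp'
      simp only at h
      have h1 := congrArg π h
      rw [map_add, map_add, hπe, hπe, zero_add, zero_add, (hσ v hp.1).2, (hσ v' hp'.1).2] at h1
      subst h1
      have h2 : j • e = j' • e := by simpa using h
      have h3 : ((j : ℝ) - j') • e = 0 := by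
        rw [sub_smul, Nat.cast_smul_eq_nsmul, Nat.cast_smul_eq_nsmul, h2, sub_self]
      rw [smul_eq_zero] at h3
      have h4 : (j : ℝ) = j' := by
        rcases h3 with h3 | h3
        · linarith
        · exact absurd h3 he0
      have h5 : j = j' := by exact_mod_cast h4
      rw [h5]
  rw [card_product, card_range] at hcard
  refine hcard.trans ((growth B X hcov (2 * m)).trans ?_)
  exact Nat.mul_le_mul hK (Nat.pow_le_pow_right (by omega) hX)

end Part4

lemma poly_exp (r : ℕ) : ∃ c : ℝ, 0 < c ∧ ∀ m : ℕ, ((2 * m + 1 : ℕ) : ℝ) ^ r ≤ c * (√2) ^ m := by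
  have h2 : (1 : ℝ) < √2 := by
    rw [Real.lt_sqrt (by norm_num)]; norm_num
  have h1 := (isLittleO_pow_const_const_pow_of_one_lt (R := ℝ) r h2).isBigO
  obtain ⟨c, hc, hb⟩ := h1.exists_pos
  rw [Asymptotics.isBigOWith_iff, Filter.eventually_atTop] at hb
  obtain ⟨M, hM⟩ := hb
  have hpos : ∀ m : ℕ, (0 : ℝ) < √2 ^ m := fun m => by positivity
  refine ⟨3 ^ r * c + ((2 * M + 1 : ℕ) : ℝ) ^ r + 1, by positivity, fun m => ?_⟩
  have hone : (1 : ℝ) ≤ √2 ^ m := one_le_pow₀ h2.le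
  by_cases hm : M ≤ m ∧ 1 ≤ m
  · have h3 := hM m hm.1
    rw [Real.norm_of_nonneg (by positivity), Real.norm_of_nonneg (by positivity)] at h3
    have h4 : ((2 * m + 1 : ℕ) : ℝ) ≤ 3 * m := by
      have : 2 * m + 1 ≤ 3 * m := by omega
      exact_mod_cast this
    calc ((2 * m + 1 : ℕ) : ℝ) ^ r ≤ (3 * m) ^ r := by gcongr
      _ = 3 ^ r * (m : ℝ) ^ r := mul_pow _ _ _
      _ ≤ 3 ^ r * (c * √2 ^ m) := by gcongr
      _ = 3 ^ r * c * √2 ^ m := by ring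
      _ ≤ _ := by
        refine mul_le_mul_of_nonneg_right ?_ (hpos m).le
        have : (0 : ℝ) ≤ ((2 * M + 1 : ℕ) : ℝ) ^ r := by positivity
        linarith
  · have hle : 2 * m + 1 ≤ 2 * M + 1 := by omega
    have h4 : ((2 * m + 1 : ℕ) : ℝ) ^ r ≤ ((2 * M + 1 : ℕ) : ℝ) ^ r := by gcongr
    have h5 : (0 : ℝ) ≤ 3 ^ r * c := by positivity
    have h6 : (0 : ℝ) ≤ ((2 * M + 1 : ℕ) : ℝ) ^ r := by positivity
    nlinarith

theorem stmt_5 (d : ℕ) (hd : 3 ≤ d) :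
    ∃ δ : ℝ, 0 < δ ∧ ∃ C : ℝ, 0 < C ∧
      ∀ A : Finset (Fin d → ℝ), A.Nonempty →
        Module.finrank ℝ (affineSpan ℝ (A : Set (Fin d → ℝ))).direction = d →
        ((A - A).card : ℝ) ≥ (2 * d - 2) * A.card - C * (A.card : ℝ) ^ ((1 : ℝ) - δ) := by
  classical
  obtain ⟨K, hKd⟩ : ∃ K : ℕ, K = 2 * (d - 1) := ⟨_, rfl⟩
  have hK4 : 4 ≤ K := by omega
  have hKr : (K : ℝ) = 2 * d - 2 := by
    have : K + 2 = 2 * d := by omega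
    have : (K : ℝ) + 2 = 2 * d := by exact_mod_cast this
    linarith
  obtain ⟨r, hr⟩ : ∃ r : ℕ, r = K ^ 5 := ⟨_, rfl⟩
  have hr2 : 2 ≤ r := by
    rw [hr]
    calc 2 ≤ 4 ^ 5 := by norm_num
      _ ≤ K ^ 5 := Nat.pow_le_pow_left hK4 5
  have hr1 : (1 : ℝ) < r := by exact_mod_cast hr2
  have hr0 : (0 : ℝ) < r := by linarith
  have hs2 : (1 : ℝ) < √2 := by
    rw [Real.lt_sqrt (by norm_num)]; norm_num
  obtain ⟨c, hc, hcm⟩ := poly_exp r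
  obtain ⟨δ, hδ⟩ : ∃ δ : ℝ, δ = Real.log (√2) / Real.log r := ⟨_, rfl⟩
  have hδ0 : 0 < δ := by
    rw [hδ]; exact div_pos (Real.log_pos hs2) (Real.log_pos hr1)
  have hrδ : (r : ℝ) ^ δ = √2 := by
    rw [Real.rpow_def_of_pos hr0, hδ, mul_div_cancel₀ _ (Real.log_pos hr1).ne',
      Real.exp_log (by positivity)]
  refine ⟨δ, hδ0, K * c * √2, by positivity, ?_⟩
  intro A hA hdim
  rw [direction_affineSpan] at hdim
  have hdm : dm A = d := hdim
  have hn := dm_lt_card A hA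
  have hn0 : (0 : ℝ) < #A := by exact_mod_cast card_pos.2 hA
  rw [← hKr]
  have hErr : 0 ≤ K * c * √2 * (#A : ℝ) ^ (1 - δ) := by positivity
  by_cases hsmall : #(A - A) ≤ K * #A
  · obtain ⟨m, hm⟩ : ∃ m, m = Nat.log r (#A - 1) := ⟨_, rfl⟩
    have hm1 : r ^ m ≤ #A - 1 := by
      rw [hm]; exact Nat.pow_log_le_self r (by omega)
    have hm2 : #A - 1 < r ^ (m + 1) := by
      rw [hm]; exact Nat.lt_pow_succ_log_self (by omega) _
    obtain ⟨e, he0, heA, hlines⟩ := few_lines A hA K hsmall m (by rw [← hr]; omega)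
    have h1 := line_bound A hA e he0 heA
    have h2 := @hlines _
    rw [hdm, ← hKd] at h1
    rw [← hr] at h2
    set L := #((A - A).image (Submodule.span ℝ {e}).mkQ) with hL
    have h1' : (K : ℝ) * #A ≤ #(A - A) + L := by exact_mod_cast h1
    have h2' : (L : ℝ) * 2 ^ m ≤ K * #A * ((2 * m + 1 : ℕ) : ℝ) ^ r := by exact_mod_cast h2
    have h22 : (2 : ℝ) ^ m = √2 ^ m * √2 ^ m := by
      rw [← mul_pow, Real.mul_self_sqrt (by norm_num)]
    have h3 : (L : ℝ) * √2 ^ m ≤ K * #A * c := by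
      have hp : (0 : ℝ) < √2 ^ m := by positivity
      refine le_of_mul_le_mul_right ?_ hp
      calc (L : ℝ) * √2 ^ m * √2 ^ m = L * 2 ^ m := by rw [h22]; ring
        _ ≤ K * #A * ((2 * m + 1 : ℕ) : ℝ) ^ r := h2'
        _ ≤ K * #A * (c * √2 ^ m) := by gcongr; exact hcm m
        _ = _ := by ring
    have h4 : (#A : ℝ) ^ δ ≤ √2 ^ m * √2 := by
      have h5 : (#A : ℝ) ≤ (r : ℝ) ^ (m + 1) := by
        have : #A ≤ r ^ (m + 1) := by omega
        exact_mod_cast this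
      calc (#A : ℝ) ^ δ ≤ ((r : ℝ) ^ (m + 1)) ^ δ := Real.rpow_le_rpow hn0.le h5 hδ0.le
        _ = ((r : ℝ) ^ δ) ^ (m + 1) := by
          rw [← Real.rpow_natCast, ← Real.rpow_mul hr0.le, mul_comm, Real.rpow_mul hr0.le,
            Real.rpow_natCast]
        _ = _ := by rw [hrδ, pow_succ]
    have h6 : (L : ℝ) ≤ K * c * √2 * (#A : ℝ) ^ (1 - δ) := by
      have hp : (0 : ℝ) < (#A : ℝ) ^ δ := by positivity
      refine le_of_mul_le_mul_right ?_ hp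
      have h7 : (#A : ℝ) ^ (1 - δ) * (#A : ℝ) ^ δ = #A := by
        rw [← Real.rpow_add hn0]; simp
      calc (L : ℝ) * (#A : ℝ) ^ δ ≤ L * (√2 ^ m * √2) := by gcongr
        _ = L * √2 ^ m * √2 := by ring
        _ ≤ K * #A * c * √2 := by gcongr
        _ = K * c * √2 * #A := by ring
        _ = K * c * √2 * ((#A : ℝ) ^ (1 - δ) * (#A : ℝ) ^ δ) := by rw [h7]
        _ = _ := by ring
    linarith
  · push Not at hsmall
    have : (K : ℝ) * #A ≤ #(A - A) := by exact_mod_cast hsmall.le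
    linarith
end

section
/- Let A, B be finite nonempty subsets of ℝ^d with |A| ≥ |B| and dim(A+B) = d. Then |A+B| ≥ |A| + d·|B| - d(d+1)/2. -/
open Finset Pointwise

namespace RuzsaAux

variable {V : Type*} [AddCommGroup V] [Module ℝ V]

lemma vspan_le {A : Finset V} {c : V} (hc : c ∈ A) (M : Submodule ℝ V)
    (h : ∀ x ∈ A, x - c ∈ M) : vectorSpan ℝ (A : Set V) ≤ M := by
  rw [vectorSpan_eq_span_vsub_set_right ℝ (Finset.mem_coe.2 hc), Submodule.span_le]
  rintro _ ⟨x, hx, rfl⟩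
  exact h x hx

lemma sub_mem_vspan {A : Finset V} {x y : V} (hx : x ∈ A) (hy : y ∈ A) :
    x - y ∈ vectorSpan ℝ (A : Set V) :=
  vsub_mem_vectorSpan ℝ (Finset.mem_coe.2 hx) (Finset.mem_coe.2 hy)

/-- the joint direction space -/
noncomputable def dirs (A B : Finset V) : Submodule ℝ V :=
  vectorSpan ℝ (A : Set V) ⊔ vectorSpan ℝ (B : Set V)

lemma dirs_comm (A B : Finset V) : dirs A B = dirs B A := sup_comm _ _

lemma dirs_left {A B : Finset V} {x y : V} (hx : x ∈ A) (hy : y ∈ A) : x - y ∈ dirs A B :=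
  Submodule.mem_sup_left (sub_mem_vspan hx hy)

lemma dirs_right {A B : Finset V} {x y : V} (hx : x ∈ B) (hy : y ∈ B) : x - y ∈ dirs A B :=
  Submodule.mem_sup_right (sub_mem_vspan hx hy)

lemma dirs_le {A B : Finset V} {a b : V} (ha : a ∈ A) (hb : b ∈ B) (M : Submodule ℝ V)
    (h : ∀ x ∈ A, x - a ∈ M) (h' : ∀ x ∈ B, x - b ∈ M) : dirs A B ≤ M :=
  sup_le (vspan_le ha M h) (vspan_le hb M h')

lemma finrank_sup_span [FiniteDimensional ℝ V] (U : Submodule ℝ V) (v : V) :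
    Module.finrank ℝ (U ⊔ Submodule.span ℝ {v} : Submodule ℝ V) ≤ Module.finrank ℝ U + 1 := by
  have h1 := Submodule.finrank_add_le_finrank_add_finrank U (Submodule.span ℝ {v})
  have h2 := finrank_span_le_card (R := ℝ) ({v} : Set V)
  simp at h2
  omega

variable [DecidableEq V] {W : Type*} [AddCommGroup W] [LinearOrder W] [IsOrderedAddMonoid W]

lemma key [FiniteDimensional ℝ V] (f : V →+ W) (hf : Function.Injective f)
    (A B : Finset V) (a b : V) (ha : a ∈ A) (hb : b ∈ B)
    (hmA : ∀ x ∈ A, f a ≤ f x) (hmB : ∀ x ∈ B, f b ≤ f x) :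
    (A.erase a + B.erase b).card + Module.finrank ℝ (dirs A B) + 1 ≤ (A + B).card := by
  have hA' : ∀ x ∈ A.erase a, f a < f x := fun x hx =>
    lt_of_le_of_ne (hmA x (mem_of_mem_erase hx)) (fun h => (ne_of_mem_erase hx) (hf h).symm)
  have hB' : ∀ x ∈ B.erase b, f b < f x := fun x hx =>
    lt_of_le_of_ne (hmB x (mem_of_mem_erase hx)) (fun h => (ne_of_mem_erase hx) (hf h).symm)
  set T := (A + B) \ (A.erase a + B.erase b) with hT
  have hab : a + b ∈ T := by
    rw [hT, mem_sdiff]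
    refine ⟨add_mem_add ha hb, fun h => ?_⟩
    obtain ⟨x, hx, y, hy, hxy⟩ := mem_add.1 h
    have h1 := add_lt_add (hA' x hx) (hB' y hy)
    rw [← map_add, ← map_add, hxy] at h1
    exact lt_irrefl _ h1
  set R := (T.erase (a + b)).image (fun t => t - (a + b)) with hR
  set S := Submodule.span ℝ (R : Set V) with hS
  have hmem : ∀ v, a + b + v ∈ T → v ∈ S := by
    intro v hv
    by_cases h0 : v = 0
    · rw [h0]; exact S.zero_mem
    · apply Submodule.subset_span
      rw [hR]
      simp only [coe_image, Set.mem_image, mem_coe, mem_erase]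
      exact ⟨a + b + v, ⟨by simpa using h0, hv⟩, by abel⟩
  set C := A.image (fun x => x - a) ∪ B.image (fun x => x - b) with hC
  have hall : ∀ v ∈ C, v ∈ S := by
    classical
    by_contra hcon
    push Not at hcon
    obtain ⟨v0, hv0, hv0S⟩ := hcon
    obtain ⟨v, hv, hmin⟩ := (C.filter (fun v => v ∉ S)).exists_min_image f
      ⟨v0, by simp only [mem_filter]; exact ⟨hv0, hv0S⟩⟩
    rw [mem_filter] at hv
    have hsum : a + b + v ∈ A + B := by
      have := hv.1
      rw [hC, mem_union, mem_image, mem_image] at this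
      rcases this with ⟨x, hx, rfl⟩ | ⟨x, hx, rfl⟩
      · exact mem_add.2 ⟨x, hx, b, hb, by abel⟩
      · exact mem_add.2 ⟨a, ha, x, hx, by abel⟩
    have hnT : a + b + v ∉ T := fun h => hv.2 (hmem v h)
    have hin : a + b + v ∈ A.erase a + B.erase b := by
      by_contra h
      exact hnT (mem_sdiff.2 ⟨hsum, h⟩)
    obtain ⟨x, hx, y, hy, hxy⟩ := mem_add.1 hin
    have hxa := hA' x hx
    have hyb := hB' y hy
    have hvv : v = (x - a) + (y - b) := by
      have : v = (a + b + v) - (a + b) := by abel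
      rw [this, ← hxy]; abel
    have hfv : f v = (f x - f a) + (f y - f b) := by rw [hvv]; simp
    have h1 : x - a ∈ S := by
      by_contra h
      have h2 := hmin (x - a) (mem_filter.2 ⟨mem_union_left _
        (mem_image_of_mem _ (mem_of_mem_erase hx)), h⟩)
      rw [hfv, map_sub] at h2
      have := sub_pos.2 hyb
      exact absurd h2 (not_le.2 (lt_add_of_pos_right _ this))
    have h1' : y - b ∈ S := by
      by_contra h
      have h2 := hmin (y - b) (mem_filter.2 ⟨mem_union_right _
        (mem_image_of_mem _ (mem_of_mem_erase hy)), h⟩)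
      rw [hfv, map_sub] at h2
      have := sub_pos.2 hxa
      exact absurd h2 (not_le.2 (lt_add_of_pos_left _ this))
    exact hv.2 (hvv ▸ S.add_mem h1 h1')
  have hle : dirs A B ≤ S := dirs_le ha hb S
    (fun x hx => hall _ (mem_union_left _ (mem_image_of_mem _ hx)))
    (fun x hx => hall _ (mem_union_right _ (mem_image_of_mem _ hx)))
  have h1 := Submodule.finrank_mono hle
  have h2 : Module.finrank ℝ S ≤ R.card := finrank_span_finset_le_card R
  have h3 : R.card ≤ (T.erase (a + b)).card := card_image_le
  have h4 := card_erase_add_one hab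
  have h5 : (A.erase a + B.erase b) ⊆ A + B := add_subset_add (erase_subset _ _) (erase_subset _ _)
  have h6 := card_sdiff_add_card_eq_card h5
  rw [← hT] at h6
  omega

set_option maxHeartbeats 2000000 in
lemma main [FiniteDimensional ℝ V] (f : V →+ W) (hf : Function.Injective f) (n : ℕ) :
    ∀ A B : Finset V, A.card + B.card = n → A.Nonempty → B.Nonempty → B.card ≤ A.card →
    (2 * A.card + 2 * Module.finrank ℝ (dirs A B) * B.card : ℤ) ≤
      2 * (A + B).card + Module.finrank ℝ (dirs A B) * (Module.finrank ℝ (dirs A B) + 1) := by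
  induction n using Nat.strong_induction_on with
  | _ n ih =>
  intro A B hn hA hB hcard
  have hAB : (A.card : ℤ) ≤ (A + B).card := by exact_mod_cast card_le_card_add_right hB
  by_cases hB1 : B.card = 1
  · rw [hB1]
    generalize Module.finrank ℝ (dirs A B) = d
    have : (d : ℤ) ≤ d * d := by exact_mod_cast Nat.le_mul_self d
    push_cast
    nlinarith
  have hBpos := hB.card_pos
  obtain ⟨a, ha, hmA⟩ := A.exists_min_image f hA
  obtain ⟨b, hb, hmB⟩ := B.exists_min_image f hB
  have hk := key f hf A B a b ha hb hmA hmB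
  have cA := card_erase_add_one ha
  have cB := card_erase_add_one hb
  obtain ⟨a0, ha0⟩ : (A.erase a).Nonempty := card_pos.1 (by omega)
  obtain ⟨b0, hb0⟩ : (B.erase b).Nonempty := card_pos.1 (by omega)
  have ha0A := mem_of_mem_erase ha0
  have hb0B := mem_of_mem_erase hb0
  have hA' : ∀ x ∈ A.erase a, f a < f x := fun x hx =>
    lt_of_le_of_ne (hmA x (mem_of_mem_erase hx)) (fun h => (ne_of_mem_erase hx) (hf h).symm)
  have hB' : ∀ x ∈ B.erase b, f b < f x := fun x hx =>
    lt_of_le_of_ne (hmB x (mem_of_mem_erase hx)) (fun h => (ne_of_mem_erase hx) (hf h).symm)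
  have splitA : ∀ x ∈ A, x = a ∨ x ∈ A.erase a := fun x hx => by
    by_cases h : x = a
    · exact Or.inl h
    · exact Or.inr (mem_erase.2 ⟨h, hx⟩)
  have splitB : ∀ x ∈ B, x = b ∨ x ∈ B.erase b := fun x hx => by
    by_cases h : x = b
    · exact Or.inl h
    · exact Or.inr (mem_erase.2 ⟨h, hx⟩)
  have ihU := ih _ (by omega) (A.erase a) (B.erase b) rfl ⟨a0, ha0⟩ ⟨b0, hb0⟩ (by omega)
  have ihAU := ih _ (by omega) A (B.erase b) rfl ⟨a, ha⟩ ⟨b0, hb0⟩ (by omega)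
  have subU : dirs (A.erase a) (B.erase b) ≤ dirs A B := dirs_le ha0 hb0 _
    (fun x hx => dirs_left (mem_of_mem_erase hx) ha0A)
    (fun x hx => dirs_right (mem_of_mem_erase hx) hb0B)
  have dU := Submodule.finrank_mono subU
  set U := dirs (A.erase a) (B.erase b) with hU
  have cA' : ((A.erase a).card : ℤ) = A.card - 1 := by omega
  have cB' : ((B.erase b).card : ℤ) = B.card - 1 := by omega
  have hcard' : (B.card : ℤ) ≤ A.card := by exact_mod_cast hcard
  have eA : ∀ x ∈ A.erase a, x - a0 ∈ U := fun x hx => dirs_left hx ha0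
  have eB : ∀ x ∈ B.erase b, x - b0 ∈ U := fun x hx => dirs_right hx hb0
  by_cases hα : a - a0 ∈ U
  · by_cases hβ : b - b0 ∈ U
    · -- no drop
      have : dirs A B ≤ U := dirs_le ha0A hb0B U
        (fun x hx => (splitA x hx).elim (fun h => h ▸ hα) (eA x))
        (fun x hx => (splitB x hx).elim (fun h => h ▸ hβ) (eB x))
      have hEq : dirs A B = U := le_antisymm this subU
      rw [hEq] at hk ⊢
      have hk' : ((A.erase a + B.erase b).card : ℤ) + Module.finrank ℝ U + 1 ≤ (A + B).card := by
        exact_mod_cast hk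
      rw [cA', cB'] at ihU
      linarith
    · -- only b outside
      have hE : dirs A (B.erase b) = U := le_antisymm
        (dirs_le ha0A hb0 U (fun x hx => (splitA x hx).elim (fun h => h ▸ hα) (eA x)) eB)
        (dirs_le ha0 hb0 _ (fun x hx => dirs_left (mem_of_mem_erase hx) ha0A)
          (fun x hx => dirs_right hx hb0))
      rw [hE] at ihAU
      have hle : dirs A B ≤ U ⊔ Submodule.span ℝ {b - b0} := dirs_le ha0A hb0B _
        (fun x hx => Submodule.mem_sup_left
          ((splitA x hx).elim (fun h => h ▸ hα) (eA x)))
        (fun x hx => (splitB x hx).elim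
          (fun h => h ▸ Submodule.mem_sup_right (Submodule.mem_span_singleton_self _))
          (fun h => Submodule.mem_sup_left (eB x h)))
      have hd := (Submodule.finrank_mono hle).trans (finrank_sup_span U _)
      have hdisj : Disjoint (A + B.erase b) (A + {b}) := by
        rw [Finset.disjoint_left]
        intro z hz hz'
        obtain ⟨x, hx, y, hy, rfl⟩ := mem_add.1 hz
        obtain ⟨x', hx', y', hy', h⟩ := mem_add.1 hz'
        rw [mem_singleton] at hy'
        subst hy'
        have e1 : x - x' ∈ U := hE ▸ dirs_left hx hx'
        have e2 := U.add_mem e1 (eB y hy)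
        apply hβ
        have : y' = x + y - x' := by rw [← h]; abel
        convert e2 using 1
        rw [this]; abel
      have hsub : (A + B.erase b) ∪ (A + {b}) ⊆ A + B :=
        union_subset (add_subset_add_left (erase_subset _ _))
          (add_subset_add_left (singleton_subset_iff.2 hb))
      have hc := card_le_card hsub
      rw [card_union_of_disjoint hdisj, card_add_singleton] at hc
      have hc' : ((A + B.erase b).card : ℤ) + A.card ≤ (A + B).card := by exact_mod_cast hc
      rw [cB'] at ihAU
      generalize Module.finrank ℝ (dirs A B) = d at *
      generalize Module.finrank ℝ U = e at *
      rcases (by omega : d = e ∨ d = e + 1) with h | h <;> subst h <;> push_cast at * <;> nlinarith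
  · by_cases hβ : b - b0 ∈ U
    · -- only a outside
      have hE : dirs (A.erase a) B = U := le_antisymm
        (dirs_le ha0 hb0B U eA (fun x hx => (splitB x hx).elim (fun h => h ▸ hβ) (eB x)))
        (dirs_le ha0 hb0 _ (fun x hx => dirs_left hx ha0)
          (fun x hx => dirs_right (mem_of_mem_erase hx) hb0B))
      have hle : dirs A B ≤ U ⊔ Submodule.span ℝ {a - a0} := dirs_le ha0A hb0B _
        (fun x hx => (splitA x hx).elim
          (fun h => h ▸ Submodule.mem_sup_right (Submodule.mem_span_singleton_self _))
          (fun h => Submodule.mem_sup_left (eA x h)))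
        (fun x hx => Submodule.mem_sup_left
          ((splitB x hx).elim (fun h => h ▸ hβ) (eB x)))
      have hd := (Submodule.finrank_mono hle).trans (finrank_sup_span U _)
      have hdisj : Disjoint (A.erase a + B) ({a} + B) := by
        rw [Finset.disjoint_left]
        intro z hz hz'
        obtain ⟨x, hx, y, hy, rfl⟩ := mem_add.1 hz
        obtain ⟨x', hx', y', hy', h⟩ := mem_add.1 hz'
        rw [mem_singleton] at hx'
        subst hx'
        have e1 : y - y' ∈ U := hE ▸ dirs_right hy hy'
        have e2 := U.add_mem e1 (eA x hx)
        apply hα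
        have : x' = x + y - y' := by rw [← h]; abel
        convert e2 using 1
        rw [this]; abel
      have hsub : (A.erase a + B) ∪ ({a} + B) ⊆ A + B :=
        union_subset (add_subset_add_right (erase_subset _ _))
          (add_subset_add_right (singleton_subset_iff.2 ha))
      have hc := card_le_card hsub
      rw [card_union_of_disjoint hdisj, card_singleton_add] at hc
      have hc' : ((A.erase a + B).card : ℤ) + B.card ≤ (A + B).card := by exact_mod_cast hc
      by_cases hlt : B.card ≤ (A.erase a).card
      · have ih2 := ih _ (by omega) (A.erase a) B rfl ⟨a0, ha0⟩ hB hlt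
        rw [hE, cA'] at ih2
        generalize Module.finrank ℝ (dirs A B) = d at *
        generalize Module.finrank ℝ U = e at *
        rcases (by omega : d = e ∨ d = e + 1) with h | h <;> subst h <;> push_cast at * <;> nlinarith
      · have ih2 := ih _ (by omega) B (A.erase a) rfl hB ⟨a0, ha0⟩ (by omega)
        rw [dirs_comm, hE, cA', add_comm B] at ih2
        have hABeq : (A.card : ℤ) = B.card := by omega
        rw [hABeq] at *
        generalize Module.finrank ℝ (dirs A B) = d at *
        generalize Module.finrank ℝ U = e at *
        rcases (by omega : d = e ∨ d = e + 1) with h | h <;> subst h <;> push_cast at * <;> nlinarith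
    · -- both outside
      set P := A.erase a + B.erase b with hP
      set Q1 := A.erase a + {b} with hQ1
      set Q2 := {a} + B.erase b with hQ2
      have cQ1 : Q1.card = (A.erase a).card := card_add_singleton _ _
      have cQ2 : Q2.card = (B.erase b).card := card_singleton_add _ _
      have d1 : Disjoint P (Q1 ∪ Q2) := by
        rw [Finset.disjoint_left]
        intro z hz hz'
        obtain ⟨x, hx, y, hy, rfl⟩ := mem_add.1 hz
        rcases mem_union.1 hz' with hz' | hz'
        · obtain ⟨x', hx', y', hy', h⟩ := mem_add.1 hz'
          rw [mem_singleton] at hy'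
          subst hy'
          have e1 : x - x' ∈ U := dirs_left hx hx'
          have e2 := U.add_mem e1 (eB y hy)
          apply hβ
          have : y' = x + y - x' := by rw [← h]; abel
          convert e2 using 1
          rw [this]; abel
        · obtain ⟨x', hx', y', hy', h⟩ := mem_add.1 hz'
          rw [mem_singleton] at hx'
          subst hx'
          have e1 : y - y' ∈ U := dirs_right hy hy'
          have e2 := U.add_mem e1 (eA x hx)
          apply hα
          have : x' = x + y - y' := by rw [← h]; abel
          convert e2 using 1
          rw [this]; abel
      have hnot : a + b ∉ P ∪ (Q1 ∪ Q2) := by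
        intro h
        have : ∃ x ∈ A, ∃ y ∈ B, x + y = a + b ∧ (f a < f x ∨ f b < f y) := by
          rcases mem_union.1 h with h | h
          · obtain ⟨x, hx, y, hy, h⟩ := mem_add.1 h
            exact ⟨x, mem_of_mem_erase hx, y, mem_of_mem_erase hy, h, Or.inl (hA' x hx)⟩
          rcases mem_union.1 h with h | h
          · obtain ⟨x, hx, y, hy, h⟩ := mem_add.1 h
            rw [mem_singleton] at hy
            exact ⟨x, mem_of_mem_erase hx, y, hy ▸ hb, h, Or.inl (hA' x hx)⟩
          · obtain ⟨x, hx, y, hy, h⟩ := mem_add.1 h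
            rw [mem_singleton] at hx
            exact ⟨x, hx ▸ ha, y, mem_of_mem_erase hy, h, Or.inr (hB' y hy)⟩
        obtain ⟨x, hx, y, hy, hxy, h⟩ := this
        have h1 : f x + f y = f a + f b := by rw [← map_add, hxy, map_add]
        rcases h with h | h
        · exact absurd h1 (add_lt_add_of_lt_of_le h (hmB y hy)).ne'
        · exact absurd h1 (add_lt_add_of_le_of_lt (hmA x hx) h).ne'
      have hsub : insert (a + b) (P ∪ (Q1 ∪ Q2)) ⊆ A + B := by
        apply insert_subset (add_mem_add ha hb)
        refine union_subset (add_subset_add (erase_subset _ _) (erase_subset _ _))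
          (union_subset ?_ ?_)
        · exact add_subset_add (erase_subset _ _) (singleton_subset_iff.2 hb)
        · exact add_subset_add (singleton_subset_iff.2 ha) (erase_subset _ _)
      have hc := card_le_card hsub
      rw [card_insert_of_notMem hnot, card_union_of_disjoint d1] at hc
      by_cases hαβ : (a - a0) - (b - b0) ∈ U
      · have hle : dirs A B ≤ U ⊔ Submodule.span ℝ {a - a0} := by
          have hα' : a - a0 ∈ U ⊔ Submodule.span ℝ {a - a0} :=
            Submodule.mem_sup_right (Submodule.mem_span_singleton_self _)
          have hβ' : b - b0 ∈ U ⊔ Submodule.span ℝ {a - a0} := by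
            have := Submodule.sub_mem _ hα' (Submodule.mem_sup_left hαβ)
            rwa [sub_sub_cancel] at this
          exact dirs_le ha0A hb0B _
            (fun x hx => (splitA x hx).elim (fun h => h ▸ hα')
              (fun h => Submodule.mem_sup_left (eA x h)))
            (fun x hx => (splitB x hx).elim (fun h => h ▸ hβ')
              (fun h => Submodule.mem_sup_left (eB x h)))
        have hd := (Submodule.finrank_mono hle).trans (finrank_sup_span U _)
        have hc1 : Q1.card ≤ (Q1 ∪ Q2).card := card_le_card subset_union_left
        have hc' : (P.card : ℤ) + (A.card - 1) + 1 ≤ (A + B).card := by omega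
        rw [cA', cB'] at ihU
        have hk' : (P.card : ℤ) + Module.finrank ℝ (dirs A B) + 1 ≤ (A + B).card := by exact_mod_cast hk
        clear hk
        generalize Module.finrank ℝ (dirs A B) = d at *
        generalize Module.finrank ℝ U = e at *
        rcases (by omega : d = e ∨ d = e + 1) with h | h
        · subst h
          linarith
        · subst h; push_cast at *; nlinarith
      · have hle : dirs A B ≤ (U ⊔ Submodule.span ℝ {a - a0}) ⊔ Submodule.span ℝ {b - b0} := by
          exact dirs_le ha0A hb0B _
            (fun x hx => (splitA x hx).elim
              (fun h => h ▸ Submodule.mem_sup_left (Submodule.mem_sup_right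
                (Submodule.mem_span_singleton_self _)))
              (fun h => Submodule.mem_sup_left (Submodule.mem_sup_left (eA x h))))
            (fun x hx => (splitB x hx).elim
              (fun h => h ▸ Submodule.mem_sup_right (Submodule.mem_span_singleton_self _))
              (fun h => Submodule.mem_sup_left (Submodule.mem_sup_left (eB x h))))
        have hd := (Submodule.finrank_mono hle).trans (finrank_sup_span _ _)
        have hd2 := finrank_sup_span U (a - a0)
        have d2 : Disjoint Q1 Q2 := by
          rw [Finset.disjoint_left]
          intro z hz hz'
          obtain ⟨x, hx, y, hy, rfl⟩ := mem_add.1 hz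
          obtain ⟨x', hx', y', hy', h⟩ := mem_add.1 hz'
          rw [mem_singleton] at hx' hy
          subst hx'
          subst hy
          apply hαβ
          have e2 := U.sub_mem (eA x hx) (eB y' hy')
          have : x' = x + y - y' := by rw [← h]; abel
          convert e2 using 1
          rw [this]; abel
        rw [card_union_of_disjoint d2] at hc
        have hc' : (P.card : ℤ) + (A.card - 1) + (B.card - 1) + 1 ≤ (A + B).card := by omega
        rw [cA', cB'] at ihU
        have hd3 : Module.finrank ℝ (dirs A B) ≤ Module.finrank ℝ U + 2 := by omega
        have hk' : (P.card : ℤ) + Module.finrank ℝ (dirs A B) + 1 ≤ (A + B).card := by exact_mod_cast hk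
        clear hd hd2 hk
        generalize Module.finrank ℝ (dirs A B) = d at *
        generalize Module.finrank ℝ U = e at *
        rcases (by omega : d = e ∨ d = e + 1 ∨ d = e + 2) with h | h | h
        · subst h; linarith
        · subst h; push_cast at *; nlinarith
        · subst h; push_cast at *; nlinarith

end RuzsaAux

theorem stmt_6 {d : ℕ} (A B : Finset (Fin d → ℝ)) (hA : A.Nonempty) (hB : B.Nonempty)
    (hcard : B.card ≤ A.card)
    (hdim : Module.finrank ℝ (affineSpan ℝ ((A + B : Finset (Fin d → ℝ)) : Set (Fin d → ℝ))).direction = d) :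
    ((A + B).card : ℤ) ≥ (A.card : ℤ) + d * B.card - d * (d + 1) / 2 := by
  let f : (Fin d → ℝ) →+ Lex (Fin d → ℝ) :=
    { toFun := toLex, map_zero' := rfl, map_add' := fun _ _ => rfl }
  have hf : Function.Injective f := toLex.injective
  have h := RuzsaAux.main f hf _ A B rfl hA hB hcard
  have hle : (affineSpan ℝ ((A + B : Finset (Fin d → ℝ)) : Set (Fin d → ℝ))).direction
      ≤ RuzsaAux.dirs A B := by
    rw [direction_affineSpan]
    obtain ⟨a, ha⟩ := hA
    obtain ⟨b, hb⟩ := hB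
    refine RuzsaAux.vspan_le (add_mem_add ha hb) _ ?_
    intro z hz
    obtain ⟨x, hx, y, hy, rfl⟩ := mem_add.1 hz
    rw [add_sub_add_comm]
    exact Submodule.add_mem _ (RuzsaAux.dirs_left hx ha) (RuzsaAux.dirs_right hy hb)
  have h1 := Submodule.finrank_mono hle
  have h2 := Submodule.finrank_le (RuzsaAux.dirs A B)
  rw [Module.finrank_fin_fun] at h2
  have h3 : Module.finrank ℝ (RuzsaAux.dirs A B) = d := by omega
  rw [h3] at h
  obtain ⟨k, hk⟩ : (2 : ℤ) ∣ (d : ℤ) * (d + 1) := (Int.even_mul_succ_self d).two_dvd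
  rw [hk] at h ⊢
  rw [Int.mul_ediv_cancel_left _ two_ne_zero]
  linarith
end
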